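/- Let d ≥ 1 and let Ω ⊂ ℝ^d be open. Let g be a smooth Riemannian metric in coordinates on Ω and S a smooth d×d-matrix field on Ω. Let f, v : Ω → ℝ^{d+1} be Lipschitz maps such that at almost every x ∈ Ω: df(x)ᵀ·df(x) = g(x), df(x)ᵀ·v(x) = 0, |v(x)| = 1, det( df(x) | v(x) ) > 0, and dv(x) = −df(x)·S(x). Then f and v are smooth on Ω. -/

import Mathlib

open Matrix MeasureTheory

/-- The `(d+1) × (d+1)` matrix `(F|w)` whose first `d` columns are those of the
`(d+1) × d` matrix `F` and whose last column is the vector `w`. -/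
def juxtCol {m d : ℕ} (F : Matrix (Fin m) (Fin d) ℝ) (w : Fin m → ℝ) :
    Matrix (Fin m) (Fin (d + 1)) ℝ :=
  Matrix.of fun i => Fin.snoc (F i) (w i)

/-- Euclidean norm of a vector in `ℝ^m`. -/
noncomputable def vecNorm {m : ℕ} (w : Fin m → ℝ) : ℝ :=
  Real.sqrt (∑ i, w i ^ 2)

/-- The Jacobian matrix of `f` at `x`, computed from the derivative within `Ω`
(the `(i,j)` entry is `∂_j f^i(x)`); it is the zero matrix at points of
non-differentiability. -/
noncomputable def jacOn {d m : ℕ} (Ω : Set (Fin d → ℝ)) (f : (Fin d → ℝ) → Fin m → ℝ)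
    (x : Fin d → ℝ) : Matrix (Fin m) (Fin d) ℝ :=
  Matrix.of fun i j => fderivWithin ℝ f Ω x (Pi.single j 1) i

open Filter Topology Set
open scoped NNReal Convolution ContDiff RealInnerProductSpace

set_option linter.unusedSectionVars false

section LipschitzCalculus

variable {V : Type*} [NormedAddCommGroup V] [NormedSpace ℝ V]
  {A A' Y : Type*} [NormedAddCommGroup A] [NormedSpace ℝ A]
  [NormedAddCommGroup A'] [NormedSpace ℝ A'] [NormedAddCommGroup Y] [NormedSpace ℝ Y]

/-- The difference quotient of `f` at `x` in the direction `v` with step `t`. -/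
noncomputable def diffQuot (v : V) (t : ℝ) (f : V → A) (x : V) : A := t⁻¹ • (f (x + t • v) - f x)

theorem LipschitzWith.norm_diffQuot_le {C : ℝ≥0} {f : V → A} (hf : LipschitzWith C f) (v : V)
    (t : ℝ) (x : V) : ‖diffQuot v t f x‖ ≤ C * ‖v‖ := by
  rcases eq_or_ne t 0 with rfl | ht
  · simpa [diffQuot] using mul_nonneg C.coe_nonneg (norm_nonneg v)
  have h := hf.norm_sub_le (x + t • v) x
  rw [add_sub_cancel_left, norm_smul] at h
  rw [diffQuot, norm_smul, norm_inv]
  have : 0 < ‖t‖ := norm_pos_iff.2 ht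
  rw [inv_mul_le_iff₀ this]
  linarith

theorem LipschitzWith.norm_fderiv_apply_le {C : ℝ≥0} {f : V → A} (hf : LipschitzWith C f)
    (x v : V) : ‖fderiv ℝ f x v‖ ≤ C * ‖v‖ :=
  (fderiv ℝ f x).le_of_opNorm_le (norm_fderiv_le_of_lipschitz ℝ hf) v

theorem DifferentiableAt.tendsto_diffQuot {f : V → A} {x : V} (hf : DifferentiableAt ℝ f x)
    (v : V) : Tendsto (fun t => diffQuot v t f x) (𝓝[≠] 0) (𝓝 (fderiv ℝ f x v)) :=
  hasLineDerivAt_iff_tendsto_slope_zero.1 (hf.hasFDerivAt.hasLineDerivAt v)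

variable [FiniteDimensional ℝ V] [MeasurableSpace V] [BorelSpace V]
  (μ : Measure V) [μ.IsAddHaarMeasure]

theorem LipschitzWith.tendsto_integral_bilin_diffQuot [FiniteDimensional ℝ A]
    (B : A →L[ℝ] A' →L[ℝ] Y) {C : ℝ≥0} {f : V → A}
    (hf : LipschitzWith C f) {g : V → A'} (hg : Integrable g μ) (v : V) :
    Tendsto (fun t => ∫ x, B (diffQuot v t f x) (g x) ∂μ) (𝓝[≠] 0)
      (𝓝 (∫ x, B (fderiv ℝ f x v) (g x) ∂μ)) := by
  refine tendsto_integral_filter_of_dominated_convergence (fun x => ‖B‖ * (C * ‖v‖) * ‖g x‖)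
    (.of_forall fun t => ?_) (.of_forall fun t => .of_forall fun x => ?_) ?_ ?_
  · have : Continuous (diffQuot v t f) := by
      have := hf.continuous
      unfold diffQuot; fun_prop
    exact B.aestronglyMeasurable_comp₂ this.aestronglyMeasurable hg.aestronglyMeasurable
  · refine (B.le_opNorm₂ _ _).trans ?_
    gcongr
    exact hf.norm_diffQuot_le v t x
  · exact hg.norm.const_mul _
  · filter_upwards [hf.ae_differentiableAt (μ := μ)] with x hx
    have h := (B.flip (g x)).continuous.tendsto (fderiv ℝ f x v)
    exact h.comp (hx.tendsto_diffQuot v)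

theorem diffQuot_eq_zero_of_notMem_cthickening {f : V → A} (v : V) {t : ℝ} (ht : |t| ≤ 1) {x : V}
    (hx : x ∉ Metric.cthickening ‖v‖ (tsupport f)) : diffQuot v t f x = 0 := by
  have h1 : f x = 0 := by
    rw [← Function.notMem_support]
    contrapose hx
    exact Metric.self_subset_cthickening _ (subset_tsupport _ hx)
  have h2 : f (x + t • v) = 0 := by
    rw [← Function.notMem_support]
    contrapose hx
    refine Metric.mem_cthickening_of_dist_le _ _ ‖v‖ (tsupport f) (subset_tsupport _ hx) ?_
    simp only [dist_eq_norm, sub_add_cancel_left, norm_neg, norm_smul, Real.norm_eq_abs]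
    exact mul_le_of_le_one_left (norm_nonneg v) ht
  simp [diffQuot, h1, h2]

theorem fderiv_eq_zero_of_notMem_cthickening {f : V → A} {r : ℝ} {x : V}
    (hx : x ∉ Metric.cthickening r (tsupport f)) : fderiv ℝ f x = 0 := by
  rw [← Function.notMem_support]
  contrapose hx
  exact Metric.self_subset_cthickening _ (support_fderiv_subset ℝ hx)

theorem LipschitzWith.tendsto_integral_bilin_diffQuot_right [FiniteDimensional ℝ A']
    (B : A →L[ℝ] A' →L[ℝ] Y) {g : V → A} (hg : LocallyIntegrable g μ) {C : ℝ≥0} {f : V → A'}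
    (hf : LipschitzWith C f) (hfc : HasCompactSupport f) (v : V) :
    Tendsto (fun t => ∫ x, B (g x) (diffQuot v t f x) ∂μ) (𝓝[≠] 0)
      (𝓝 (∫ x, B (g x) (fderiv ℝ f x v) ∂μ)) := by
  set K := Metric.cthickening ‖v‖ (tsupport f)
  have hK : IsCompact K := IsCompact.cthickening hfc
  have hgK : Integrable (K.indicator g) μ :=
    (integrable_indicator_iff hK.measurableSet).2 (hg.integrableOn_isCompact hK)
  have key := hf.tendsto_integral_bilin_diffQuot μ B.flip hgK v
  have e0 : ∫ x, B.flip (fderiv ℝ f x v) (K.indicator g x) ∂μ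
      = ∫ x, B (g x) (fderiv ℝ f x v) ∂μ := by
    congr 1; ext x
    by_cases hx : x ∈ K
    · simp [hx]
    · simp [hx, fderiv_eq_zero_of_notMem_cthickening hx]
  rw [e0] at key
  refine key.congr' ?_
  have h1 : ∀ᶠ t : ℝ in 𝓝[≠] 0, |t| ≤ 1 := by
    refine eventually_nhdsWithin_of_eventually_nhds ?_
    filter_upwards [Metric.ball_mem_nhds (0 : ℝ) one_pos] with t ht
    simpa using (mem_ball_zero_iff.1 ht).le
  filter_upwards [h1] with t ht
  congr 1; ext x
  by_cases hx : x ∈ K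
  · simp [hx]
  · simp [hx, diffQuot_eq_zero_of_notMem_cthickening v ht hx]

theorem integral_bilin_diffQuot (B : A →L[ℝ] A' →L[ℝ] Y) {f : V → A} {g : V → A'} (v : V) (t : ℝ)
    (h1 : Integrable (fun x => B (f x) (g x)) μ)
    (h2 : Integrable (fun x => B (f (x + t • v)) (g x)) μ) :
    ∫ x, B (diffQuot v t f x) (g x) ∂μ = - ∫ x, B (f x) (diffQuot v (-t) g x) ∂μ := by
  have e (x : V) : B (f (x + t • v)) (g x) =
      (fun y => B (f y) (g (y + (-t) • v))) (x + t • v) := by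
    simp [add_assoc]
  have h3 : Integrable (fun y => B (f y) (g (y + (-t) • v))) μ := by
    simp_rw [e] at h2
    refine ((measurePreserving_add_right μ (t • v)).integrable_comp_emb
      (MeasurableEquiv.addRight (t • v)).measurableEmbedding).1 h2
  have e2 : ∫ x, B (f (x + t • v)) (g x) ∂μ = ∫ x, B (f x) (g (x + (-t) • v)) ∂μ := by
    simp_rw [e]
    exact integral_add_right_eq_self (fun y => B (f y) (g (y + (-t) • v))) _
  simp only [diffQuot, map_smul, map_sub, _root_.smul_apply,
    _root_.sub_apply]
  rw [integral_smul, integral_smul, integral_sub h2 h1, integral_sub h3 h1, e2, inv_neg, neg_smul t⁻¹,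
    neg_neg]

/-- Integration by parts for Lipschitz functions and continuous bilinear pairings. -/
theorem LipschitzWith.integral_bilin_fderiv [FiniteDimensional ℝ A] [FiniteDimensional ℝ A']
    (B : A →L[ℝ] A' →L[ℝ] Y) {C D : ℝ≥0} {f : V → A} (hf : LipschitzWith C f)
    {g : V → A'} (hg : LipschitzWith D g) (hgc : HasCompactSupport g) (v : V) :
    ∫ x, B (fderiv ℝ f x v) (g x) ∂μ = - ∫ x, B (f x) (fderiv ℝ g x v) ∂μ := by
  have hfc := hf.continuous
  have hgc' := hg.continuous
  have t1 := hf.tendsto_integral_bilin_diffQuot μ B (hgc'.integrable_of_hasCompactSupport hgc) v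
  have t2 := (hg.tendsto_integral_bilin_diffQuot_right μ B hfc.locallyIntegrable hgc v).neg
  have hneg : Tendsto (fun t : ℝ => -t) (𝓝[≠] 0) (𝓝[≠] 0) := by
    refine tendsto_nhdsWithin_of_tendsto_nhds_of_eventually_within _ ?_ ?_
    · have : Tendsto (fun t : ℝ => -t) (𝓝 0) (𝓝 (-0)) := tendsto_id.neg
      rw [neg_zero] at this
      exact this.mono_left nhdsWithin_le_nhds
    · filter_upwards [self_mem_nhdsWithin] with t ht
      simpa using ht
  refine tendsto_nhds_unique t1 ((t2.comp hneg).congr fun t => ?_)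
  have hcs : ∀ h : V → A, HasCompactSupport fun x => B (h x) (g x) := fun h =>
    hgc.mono fun x hx => by
      contrapose! hx
      simp_all
  refine (integral_bilin_diffQuot μ B v t ?_ ?_).symm
  · exact Continuous.integrable_of_hasCompactSupport (by fun_prop) (hcs _)
  · exact Continuous.integrable_of_hasCompactSupport (by fun_prop) (hcs fun x => f (x + t • v))

variable {μ}

theorem LipschitzWith.fderiv_convolution_apply [FiniteDimensional ℝ A] {ρ : V → ℝ}
    (hρ : ContDiff ℝ 1 ρ) (hρc : HasCompactSupport ρ) {C : ℝ≥0} {f : V → A}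
    (hf : LipschitzWith C f) (x v : V) :
    fderiv ℝ (ρ ⋆[ContinuousLinearMap.lsmul ℝ ℝ, μ] f) x v =
      (ρ ⋆[ContinuousLinearMap.lsmul ℝ ℝ, μ] fun y => fderiv ℝ f y v) x := by
  have hfc := hf.continuous
  have hd : DifferentiableAt ℝ (ρ ⋆[ContinuousLinearMap.lsmul ℝ ℝ, μ] f) x :=
    (hρc.hasFDerivAt_convolution_left _ hρ hfc.locallyIntegrable x).differentiableAt
  have hρx : Continuous fun y => ρ (x - y) := hρ.continuous.comp (by fun_prop)
  have hρxc : HasCompactSupport fun y => ρ (x - y) :=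
    hρc.comp_homeomorph (Homeomorph.subLeft x)
  have t1 := hf.tendsto_integral_bilin_diffQuot μ (ContinuousLinearMap.lsmul ℝ ℝ).flip
    (hρx.integrable_of_hasCompactSupport hρxc) v
  rw [convolution_eq_swap]
  refine tendsto_nhds_unique (hd.tendsto_diffQuot v) (t1.congr fun t => ?_)
  have e : (ρ ⋆[ContinuousLinearMap.lsmul ℝ ℝ, μ] f) (x + t • v) =
      (ρ ⋆[ContinuousLinearMap.lsmul ℝ ℝ, μ] fun y => f (y + t • v)) x := by
    rw [convolution_def, convolution_def]
    congr 1; ext y; congr 2; abel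
  rw [diffQuot, e, convolution_eq_swap, convolution_eq_swap, ← integral_sub, ← integral_smul]
  · congr 1; ext y
    simp only [diffQuot, ContinuousLinearMap.flip_apply, ContinuousLinearMap.lsmul_apply,
      ← smul_sub]
    rw [smul_comm]
  · refine Continuous.integrable_of_hasCompactSupport (hρx.smul (by fun_prop)) hρxc.smul_right
  · refine Continuous.integrable_of_hasCompactSupport (hρx.smul (by fun_prop)) hρxc.smul_right

variable (V) in
/-- A sequence of bump functions around the origin whose supports shrink to a point. -/
theorem exists_contDiffBump_seq : ∃ φ : ℕ → ContDiffBump (0 : V),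
    Tendsto (fun n => (φ n).rOut) atTop (𝓝 0) ∧ (∀ n, (φ n).rOut ≤ 2 * (φ n).rIn) ∧
    ∀ n, (φ n).rOut ≤ 2 := by
  refine ⟨fun n => ⟨1 / (n + 1 : ℝ), 2 * (1 / (n + 1 : ℝ)), by positivity, ?_⟩, ?_, ?_, ?_⟩
  · have : 0 < 1 / (n + 1 : ℝ) := by positivity
    linarith
  · simpa using (tendsto_one_div_add_atTop_nhds_zero_nat (𝕜 := ℝ)).const_mul 2
  · intro n; exact le_rfl
  · intro n
    have : 1 / (n + 1 : ℝ) ≤ 1 := by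
      rw [div_le_one (by positivity)]; linarith [Nat.cast_nonneg (α := ℝ) n]
    change 2 * (1 / (n + 1 : ℝ)) ≤ 2
    linarith

theorem ContDiffBump.norm_convolution_le (φ : ContDiffBump (0 : V)) {g : V → A} {M : ℝ} {x : V}
    (hg : ∀ y ∈ Metric.ball x φ.rOut, ‖g y‖ ≤ M) :
    ‖((φ.normed μ) ⋆[ContinuousLinearMap.lsmul ℝ ℝ, μ] g) x‖ ≤ M := by
  rw [convolution_def]
  have : ∫ y, φ.normed μ y * M ∂μ = M := by
    rw [integral_mul_const, φ.integral_normed, one_mul]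
  rw [← this]
  refine norm_integral_le_of_norm_le (φ.integrable_normed.mul_const M) (.of_forall fun y => ?_)
  rw [ContinuousLinearMap.lsmul_apply, norm_smul, Real.norm_of_nonneg (φ.nonneg_normed y)]
  by_cases hy : y ∈ Metric.ball (0 : V) φ.rOut
  · refine mul_le_mul_of_nonneg_left (hg _ ?_) (φ.nonneg_normed y)
    simpa [dist_eq_norm] using hy
  · rw [← φ.support_normed_eq (μ := μ), Function.notMem_support] at hy
    simp [hy]

theorem ContDiffBump.lipschitzWith_convolution (φ : ContDiffBump (0 : V)) {f : V → A} {C : ℝ≥0}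
    (hf : LipschitzWith C f) :
    LipschitzWith C ((φ.normed μ) ⋆[ContinuousLinearMap.lsmul ℝ ℝ, μ] f) := by
  have hfc := hf.continuous
  refine LipschitzWith.of_dist_le_mul fun x y => ?_
  rw [dist_eq_norm]
  have e : ((φ.normed μ) ⋆[ContinuousLinearMap.lsmul ℝ ℝ, μ] f) x -
      ((φ.normed μ) ⋆[ContinuousLinearMap.lsmul ℝ ℝ, μ] f) y =
      ((φ.normed μ) ⋆[ContinuousLinearMap.lsmul ℝ ℝ, μ] fun z => f (z + (x - y)) - f z) y := by
    rw [convolution_def, convolution_def, convolution_def, ← integral_sub]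
    · congr 1; ext z
      rw [← map_sub]
      congr 3; abel
    · exact Continuous.integrable_of_hasCompactSupport
        (φ.continuous_normed.smul (by fun_prop)) φ.hasCompactSupport_normed.smul_right
    · exact Continuous.integrable_of_hasCompactSupport
        (φ.continuous_normed.smul (by fun_prop)) φ.hasCompactSupport_normed.smul_right
  rw [e]
  refine φ.norm_convolution_le fun z _ => ?_
  have := hf.dist_le_mul (z + (x - y)) z
  rwa [dist_eq_norm, dist_eq_norm, add_sub_cancel_left, ← dist_eq_norm x y] at this

theorem locallyIntegrable_of_bounded {g : V → A} (hm : AEStronglyMeasurable g μ) {M : ℝ}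
    (hM : ∀ x, ‖g x‖ ≤ M) : LocallyIntegrable g μ :=
  (memLp_top_of_bound hm M (.of_forall hM)).locallyIntegrable le_top

theorem aestronglyMeasurable_fderiv_apply [FiniteDimensional ℝ A] (f : V → A) (v : V) :
    AEStronglyMeasurable (fun x => fderiv ℝ f x v) μ := by
  borelize A
  exact (measurable_fderiv_apply_const ℝ f v).aestronglyMeasurable

theorem LipschitzWith.locallyIntegrable_fderiv_apply [FiniteDimensional ℝ A] {f : V → A} {C : ℝ≥0}
    (hf : LipschitzWith C f) (v : V) : LocallyIntegrable (fun x => fderiv ℝ f x v) μ :=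
  locallyIntegrable_of_bounded (aestronglyMeasurable_fderiv_apply f v)
    fun x => hf.norm_fderiv_apply_le x v

end LipschitzCalculus

section Piola

variable {V : Type*} [NormedAddCommGroup V] [NormedSpace ℝ V]
  [FiniteDimensional ℝ V] [MeasurableSpace V] [BorelSpace V]
  (μ : Measure V) [μ.IsAddHaarMeasure]
  {W : Type*} [NormedAddCommGroup W] [NormedSpace ℝ W] [FiniteDimensional ℝ W]
  {ι : Type*} [Fintype ι] [DecidableEq ι]

theorem Finset.sum_sum_eq_zero_of_antisymm {T : ι → ι → ℝ} (h : ∀ i k, T i k = - T k i) :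
    ∑ i, ∑ k, T i k = 0 := by
  have h1 : ∑ i, ∑ k, T i k = - ∑ i, ∑ k, T i k := by
    conv_lhs => rw [Finset.sum_comm]
    simp_rw [← Finset.sum_neg_distrib]
    exact Finset.sum_congr rfl fun i _ => Finset.sum_congr rfl fun k _ => h k i
  linarith

theorem ContinuousAlternatingMap.map_update_update_swap (η : W [⋀^ι]→L[ℝ] ℝ) (m : ι → W) {i k : ι}
    (hik : i ≠ k) (a h : W) :
    η (Function.update (Function.update m i a) k h) =
      - η (Function.update (Function.update m k a) i h) := by
  have e : Function.update (Function.update m i a) k h =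
      Function.update (Function.update m k a) i h ∘ Equiv.swap i k := by
    ext j
    rcases eq_or_ne j k with rfl | hjk
    · simp
    rcases eq_or_ne j i with rfl | hji
    · simp [hik, hik.symm]
    · simp [Equiv.swap_apply_of_ne_of_ne hji hjk, hji, hjk]
  rw [e]
  exact η.toAlternatingMap.map_swap _ hik

theorem integral_fderiv_apply_eq_zero {h : V → ℝ} (hh : ContDiff ℝ 1 h)
    (hc : HasCompactSupport h) (v : V) : ∫ x, fderiv ℝ h x v ∂μ = 0 := by
  obtain ⟨D, hD⟩ := ContDiff.lipschitzWith_of_hasCompactSupport hc hh (by simp)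
  have := (LipschitzWith.const (α := V) (1 : ℝ)).integral_bilin_fderiv μ
    (ContinuousLinearMap.mul ℝ ℝ) hD hc v
  simpa using this

theorem ContDiff.integral_alternating_fderiv_eq_zero (η : W [⋀^ι]→L[ℝ] ℝ) (b : ι → V)
    {f φ : V → W} (hf : ContDiff ℝ 2 f) (hφ : ContDiff ℝ 1 φ) (hφc : HasCompactSupport φ) :
    ∫ x, ∑ i, η (Function.update (fun j => fderiv ℝ f x (b j)) i (fderiv ℝ φ x (b i))) ∂μ = 0 := by
  have hdf : ContDiff ℝ 1 (fderiv ℝ f) := hf.fderiv_right (by norm_num)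
  set m : V → ι → W := fun x j => fderiv ℝ f x (b j) with hm
  set Θ : ι → V → ℝ := fun i x => η (Function.update (m x) i (φ x)) with hΘ
  have hmC : ∀ j, ContDiff ℝ 1 fun x => m x j := fun j => hdf.clm_apply contDiff_const
  have hupd : ∀ i, ContDiff ℝ 1 fun x => Function.update (m x) i (φ x) := by
    intro i
    rw [contDiff_pi]
    intro j
    rcases eq_or_ne j i with rfl | hji
    · simpa using hφ
    · simpa [hji] using hmC j
  have hΘC : ∀ i, ContDiff ℝ 1 (Θ i) := fun i =>
    (η.toContinuousMultilinearMap.contDiff).comp (hupd i)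
  have hΘc : ∀ i, HasCompactSupport (Θ i) := by
    intro i
    refine hφc.mono fun x hx => ?_
    contrapose! hx
    simp only [Function.mem_support, not_not] at hx ⊢
    exact η.map_coord_zero i (by simp [hx])
  set H : V → ι → ι → W := fun x i k => fderiv ℝ (fun y => m y k) x (b i) with hH
  have hHsymm : ∀ x i k, H x i k = H x k i := by
    intro x i k
    have e : ∀ k i, H x i k = fderiv ℝ (fderiv ℝ f) x (b i) (b k) := by
      intro k i
      have := ((hdf.differentiable (by simp) x).hasFDerivAt.clm_apply
        (hasFDerivAt_const (b k) x)).fderiv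
      simp [hH, hm, this]
    rw [e, e]
    exact (hf.contDiffAt.isSymmSndFDerivAt (by simp)) _ _
  set T : V → ι → ι → ℝ := fun x i k =>
    if k = i then 0 else η (Function.update (Function.update (m x) i (φ x)) k (H x i k)) with hT
  have hderiv : ∀ i x, fderiv ℝ (Θ i) x (b i) =
      η (Function.update (m x) i (fderiv ℝ φ x (b i))) + ∑ k, T x i k := by
    intro i x
    have h1 : HasFDerivAt (fun x => Function.update (m x) i (φ x))
        (ContinuousLinearMap.pi fun k =>
          if k = i then fderiv ℝ φ x else fderiv ℝ (fun y => m y k) x) x := by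
      rw [hasFDerivAt_pi]
      intro k
      rcases eq_or_ne k i with rfl | hki
      · simpa using (hφ.differentiable (by simp) x).hasFDerivAt
      · simpa [hki] using ((hmC k).differentiable (by simp) x).hasFDerivAt
    have h2 := ((η.toContinuousMultilinearMap.hasFDerivAt
      (Function.update (m x) i (φ x))).comp x h1).fderiv
    have h3 : fderiv ℝ (Θ i) x = _ := h2
    rw [h3, ContinuousLinearMap.comp_apply, ContinuousMultilinearMap.linearDeriv_apply,
      ← Finset.add_sum_erase _ _ (Finset.mem_univ i),
      ← Finset.add_sum_erase (a := i) _ (T x i) (Finset.mem_univ i)]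
    congr 1
    · simp
    · simp only [hT, if_true, zero_add]
      refine Finset.sum_congr rfl fun k hk => ?_
      have := Finset.ne_of_mem_erase hk
      simp [this, hH]
  have hTz : ∀ x, ∑ i, ∑ k, T x i k = 0 := by
    intro x
    refine Finset.sum_sum_eq_zero_of_antisymm fun i k => ?_
    rcases eq_or_ne i k with rfl | hik
    · simp [hT]
    · simp only [hT, hik, hik.symm, if_false, hHsymm x k i]
      exact η.map_update_update_swap _ hik _ _
  have hsum : ∀ x, ∑ i, η (Function.update (m x) i (fderiv ℝ φ x (b i))) =
      ∑ i, fderiv ℝ (Θ i) x (b i) := by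
    intro x
    simp_rw [hderiv, Finset.sum_add_distrib, hTz, add_zero]
  refine (integral_congr_ae (.of_forall hsum)).trans ?_
  rw [integral_finsetSum]
  · exact Finset.sum_eq_zero fun i _ => integral_fderiv_apply_eq_zero μ (hΘC i) (hΘc i) _
  · intro i _
    have := (hΘC i).continuous_fderiv (by simp)
    refine Continuous.integrable_of_hasCompactSupport (by fun_prop) ?_
    exact (hΘc i).fderiv_apply ℝ (b i)

theorem ContinuousAlternatingMap.continuous_update (η : W [⋀^ι]→L[ℝ] ℝ) (i : ι) :
    Continuous fun p : (ι → W) × W => η (Function.update p.1 i p.2) :=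
  η.cont.comp (continuous_fst.update i continuous_snd)

theorem ContinuousAlternatingMap.abs_update_le (η : W [⋀^ι]→L[ℝ] ℝ) (i : ι) {m : ι → W} {z : W}
    {M : ℝ} (hm : ∀ j, ‖m j‖ ≤ M) (hz : ‖z‖ ≤ M) :
    |η (Function.update m i z)| ≤ ‖η‖ * M ^ Fintype.card ι := by
  refine (η.le_opNorm _).trans (mul_le_mul_of_nonneg_left ?_ (norm_nonneg _))
  refine (Finset.prod_le_prod (fun _ _ => norm_nonneg _) fun j _ => ?_).trans_eq
    (by rw [Finset.prod_const, Finset.card_univ])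
  rcases eq_or_ne j i with rfl | hji
  · simpa using hz
  · simpa [hji] using hm j

theorem LipschitzWith.integrable_alternating_fderiv (η : W [⋀^ι]→L[ℝ] ℝ) (b : ι → V)
    {C D : ℝ≥0} {f φ : V → W} (hf : LipschitzWith C f) (hφ : LipschitzWith D φ)
    (hφc : HasCompactSupport φ) (h : V) :
    Integrable (fun x => ∑ i, η (Function.update (fun j => fderiv ℝ f (x + h) (b j)) i
      (fderiv ℝ φ x (b i)))) μ := by
  refine integrable_finsetSum _ fun i _ => ?_
  set M : ℝ := (C + D) * ∑ j, ‖b j‖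
  have hb : ∀ j, ‖b j‖ ≤ ∑ j, ‖b j‖ := fun j =>
    Finset.single_le_sum (f := fun j => ‖b j‖) (fun _ _ => norm_nonneg _) (Finset.mem_univ j)
  have hfb : ∀ x j, ‖fderiv ℝ f x (b j)‖ ≤ M := fun x j =>
    (hf.norm_fderiv_apply_le x (b j)).trans 
      (mul_le_mul (le_add_of_nonneg_right D.coe_nonneg) (hb j) (norm_nonneg _) (by positivity))
  have hφb : ∀ x j, ‖fderiv ℝ φ x (b j)‖ ≤ M := fun x j =>
    (hφ.norm_fderiv_apply_le x (b j)).trans 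
      (mul_le_mul (le_add_of_nonneg_left C.coe_nonneg) (hb j) (norm_nonneg _) (by positivity))
  have hint : Integrable ((tsupport φ).indicator fun _ => ‖η‖ * M ^ Fintype.card ι) μ :=
    (integrable_indicator_iff hφc.measurableSet).2
      (continuous_const.continuousOn.integrableOn_compact hφc)
  refine hint.mono' ?_ (.of_forall fun x => ?_)
  · refine (η.continuous_update i).comp_aestronglyMeasurable (AEStronglyMeasurable.prodMk ?_
      (aestronglyMeasurable_fderiv_apply φ (b i)))
    borelize W
    exact (measurable_pi_lambda _ fun j => (measurable_fderiv_apply_const ℝ f (b j)).comp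
      (measurable_add_const h)).aestronglyMeasurable
  · by_cases hx : x ∈ tsupport φ
    · rw [indicator_of_mem hx]
      exact η.abs_update_le i (fun j => hfb _ j) (hφb _ i)
    · have : fderiv ℝ φ x = 0 := by
        rw [← Function.notMem_support]
        exact fun h => hx (support_fderiv_subset ℝ h)
      rw [indicator_of_notMem hx, this]
      refine le_of_eq (norm_eq_zero.2 (η.map_coord_zero i (by simp)))

/-- The Piola identity for Lipschitz maps, in weak form: the cofactors of the differential of a
Lipschitz map are divergence free. -/
theorem LipschitzWith.integral_alternating_fderiv_eq_zero (η : W [⋀^ι]→L[ℝ] ℝ) (b : ι → V)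
    {C D : ℝ≥0} {f φ : V → W} (hf : LipschitzWith C f) (hφ : LipschitzWith D φ)
    (hφc : HasCompactSupport φ) :
    ∫ x, ∑ i, η (Function.update (fun j => fderiv ℝ f x (b j)) i (fderiv ℝ φ x (b i))) ∂μ = 0 := by
  obtain ⟨ρ, hρ0, hρr, hρ2⟩ := exists_contDiffBump_seq V
  set F : ℕ → V → W := fun n => (ρ n).normed μ ⋆[ContinuousLinearMap.lsmul ℝ ℝ, μ] f
  set P : ℕ → V → W := fun n => (ρ n).normed μ ⋆[ContinuousLinearMap.lsmul ℝ ℝ, μ] φ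
  have hF : ∀ n x v, fderiv ℝ (F n) x v = _ := fun n x v =>
    hf.fderiv_convolution_apply (μ := μ) (ρ n).contDiff_normed (ρ n).hasCompactSupport_normed x v
  have hP : ∀ n x v, fderiv ℝ (P n) x v = _ := fun n x v =>
    hφ.fderiv_convolution_apply (μ := μ) (ρ n).contDiff_normed (ρ n).hasCompactSupport_normed x v
  have hFL : ∀ n, LipschitzWith C (F n) := fun n => (ρ n).lipschitzWith_convolution hf
  have hPL : ∀ n, LipschitzWith D (P n) := fun n => (ρ n).lipschitzWith_convolution hφ
  have hPc : ∀ n, HasCompactSupport (P n) := fun n =>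
    (ρ n).hasCompactSupport_normed.convolution _ hφc
  have hF2 : ∀ n, ContDiff ℝ 2 (F n) := fun n =>
    (ρ n).hasCompactSupport_normed.contDiff_convolution_left (n := 2) _ (ρ n).contDiff_normed
      hf.continuous.locallyIntegrable
  have hP1 : ∀ n, ContDiff ℝ 1 (P n) := fun n =>
    (ρ n).hasCompactSupport_normed.contDiff_convolution_left (n := 1) _ (ρ n).contDiff_normed
      hφ.continuous.locallyIntegrable
  set M : ℝ := (C + D) * ∑ j, ‖b j‖
  have hb : ∀ j, ‖b j‖ ≤ ∑ j, ‖b j‖ := fun j =>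
    Finset.single_le_sum (f := fun j => ‖b j‖) (fun _ _ => norm_nonneg _) (Finset.mem_univ j)
  have hFb : ∀ n x j, ‖fderiv ℝ (F n) x (b j)‖ ≤ M := fun n x j =>
    ((hFL n).norm_fderiv_apply_le x (b j)).trans 
      (mul_le_mul (le_add_of_nonneg_right D.coe_nonneg) (hb j) (norm_nonneg _) (by positivity))
  have hPb : ∀ n x j, ‖fderiv ℝ (P n) x (b j)‖ ≤ M := fun n x j =>
    ((hPL n).norm_fderiv_apply_le x (b j)).trans 
      (mul_le_mul (le_add_of_nonneg_left C.coe_nonneg) (hb j) (norm_nonneg _) (by positivity))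
  set K := Metric.cthickening 2 (tsupport φ)
  have hK : IsCompact K := IsCompact.cthickening hφc
  have hP0 : ∀ n, ∀ x ∉ K, ∀ v, fderiv ℝ (P n) x v = 0 := by
    intro n x hx v
    rw [hP, ← norm_le_zero_iff]
    refine (ρ n).norm_convolution_le fun y hy => ?_
    have hy' : y ∉ tsupport φ := fun h =>
      hx (Metric.mem_cthickening_of_dist_le _ _ 2 _ h
        (by rw [dist_comm]; exact (Metric.mem_ball.1 hy).le.trans (hρ2 n)))
    have : fderiv ℝ φ y = 0 := by
      rw [← Function.notMem_support]
      exact fun h => hy' (support_fderiv_subset ℝ h)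
    simp [this]
  have hlimF : ∀ j, ∀ᵐ x ∂μ, Tendsto (fun n => fderiv ℝ (F n) x (b j)) atTop
      (𝓝 (fderiv ℝ f x (b j))) := by
    intro j
    simp_rw [hF]
    exact ContDiffBump.ae_convolution_tendsto_right_of_locallyIntegrable hρ0 (.of_forall hρr)
      (hf.locallyIntegrable_fderiv_apply _)
  have hlimP : ∀ j, ∀ᵐ x ∂μ, Tendsto (fun n => fderiv ℝ (P n) x (b j)) atTop
      (𝓝 (fderiv ℝ φ x (b j))) := by
    intro j
    simp_rw [hP]
    exact ContDiffBump.ae_convolution_tendsto_right_of_locallyIntegrable hρ0 (.of_forall hρr)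
      (hφ.locallyIntegrable_fderiv_apply _)
  have hlim : Tendsto (fun n => ∫ x, ∑ i, η (Function.update (fun j => fderiv ℝ (F n) x (b j)) i
      (fderiv ℝ (P n) x (b i))) ∂μ) atTop
      (𝓝 (∫ x, ∑ i, η (Function.update (fun j => fderiv ℝ f x (b j)) i
        (fderiv ℝ φ x (b i))) ∂μ)) := by
    refine tendsto_integral_of_dominated_convergence
      (K.indicator fun _ => ∑ _i : ι, ‖η‖ * M ^ Fintype.card ι) (fun n => ?_) ?_ (fun n => ?_) ?_
    · simpa using ((hFL n).integrable_alternating_fderiv μ η b (hPL n) (hPc n) 0).1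
    · exact (integrable_indicator_iff hK.measurableSet).2
        (continuous_const.continuousOn.integrableOn_compact hK)
    · refine .of_forall fun x => ?_
      by_cases hx : x ∈ K
      · rw [indicator_of_mem hx]
        exact (norm_sum_le _ _).trans (Finset.sum_le_sum fun i _ =>
          η.abs_update_le i (fun j => hFb n x j) (hPb n x i))
      · rw [indicator_of_notMem hx]
        refine le_of_eq (norm_eq_zero.2 (Finset.sum_eq_zero fun i _ => ?_))
        exact η.map_coord_zero i (by simp [hP0 n x hx])
    · filter_upwards [ae_all_iff.2 hlimF, ae_all_iff.2 hlimP] with x h1 h2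
      refine tendsto_finsetSum _ fun i _ => ?_
      exact ((η.continuous_update i).tendsto (fun j => fderiv ℝ f x (b j), fderiv ℝ φ x (b i))).comp
        ((tendsto_pi_nhds.2 h1).prodMk_nhds (h2 i))
  refine tendsto_nhds_unique hlim ?_
  simp_rw [(hF2 _).integral_alternating_fderiv_eq_zero μ η b (hP1 _) (hPc _)]
  exact tendsto_const_nhds

end Piola

section Caccioppoli

variable {W : Type*} [NormedAddCommGroup W] [InnerProductSpace ℝ W] [FiniteDimensional ℝ W]
  {ι : Type*} [Fintype ι]

/-- An elliptic quadratic form on `ℝ^ι` is elliptic on families of vectors of a Euclidean space. -/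
theorem sum_norm_sq_le_of_elliptic {a : ι → ι → ℝ} {c : ℝ}
    (h : ∀ y : ι → ℝ, c * ∑ i, y i ^ 2 ≤ ∑ i, ∑ j, a i j * (y j * y i)) (z : ι → W) :
    c * ∑ i, ‖z i‖ ^ 2 ≤ ∑ i, ∑ j, a i j * ⟪z j, z i⟫ := by
  set e := stdOrthonormalBasis ℝ W
  have h1 : ∀ i, ‖z i‖ ^ 2 = ∑ k, ⟪e k, z i⟫ ^ 2 := fun i => by
    rw [← e.sum_sq_norm_inner_right (z i)]
    simp
  have h2 : ∀ i j, ⟪z j, z i⟫ = ∑ k, ⟪e k, z j⟫ * ⟪e k, z i⟫ := fun i j => by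
    rw [← e.sum_inner_mul_inner]
    exact Finset.sum_congr rfl fun k _ => by rw [real_inner_comm (e k) (z j)]
  simp_rw [h1, h2, Finset.mul_sum]
  calc ∑ i, ∑ k, c * ⟪e k, z i⟫ ^ 2 = ∑ k, c * ∑ i, ⟪e k, z i⟫ ^ 2 := by
        rw [Finset.sum_comm]; simp_rw [Finset.mul_sum]
    _ ≤ ∑ k, ∑ i, ∑ j, a i j * (⟪e k, z j⟫ * ⟪e k, z i⟫) :=
        Finset.sum_le_sum fun k _ => h _
    _ = _ := by
        rw [Finset.sum_comm]
        refine Finset.sum_congr rfl fun i _ => ?_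
        rw [Finset.sum_comm]

theorem mul_le_half_sq_add {c κ t : ℝ} (hc : 0 < c) : κ * t ≤ c / 2 * t ^ 2 + κ ^ 2 / (2 * c) := by
  have : c / 2 * t ^ 2 + κ ^ 2 / (2 * c) - κ * t = (c * t - κ) ^ 2 / (2 * c) := by
    field_simp
    ring
  have h2 : 0 ≤ (c * t - κ) ^ 2 / (2 * c) := by positivity
  linarith

theorem caccioppoli_pointwise {a a' : ι → ι → ℝ} {A c M Z C H ζ : ℝ} (hc : 0 < c)
    (hA : 0 ≤ A) (hM : 0 ≤ M) (hZ : 0 ≤ Z) (hH : 0 ≤ H) (hζ0 : 0 ≤ ζ) (hζ1 : ζ ≤ 1)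
    (ha : ∀ i j, |a i j| ≤ A) (haa : ∀ i j, |a' i j - a i j| ≤ A * H)
    (hell : ∀ y : ι → ℝ, c * ∑ i, y i ^ 2 ≤ ∑ i, ∑ j, a i j * (y j * y i))
    {F F' p : ι → W} {dζ : ι → ℝ} {w : W} (hF : ∀ i, ‖F' i‖ ≤ M) (hdζ : ∀ i, |dζ i| ≤ Z)
    (hw : ‖w‖ ≤ C * H) (hp : ∀ i, p i = ζ ^ 2 • (F' i - F i) + (2 * ζ * dζ i) • w) :
    c / 2 * ∑ i, (ζ * ‖F' i - F i‖) ^ 2 -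
      (Fintype.card ι * (Fintype.card ι * (2 * A * Z * C + A * M)) ^ 2 / (2 * c) +
        Fintype.card ι ^ 2 * (2 * A * M * Z * C)) * H ^ 2 ≤
      ∑ i, ∑ j, (a' i j * ⟪F' j, p i⟫ - a i j * ⟪F j, p i⟫) := by
  set N : ℝ := ((Fintype.card ι : ℕ) : ℝ) with hN
  set t : ι → ℝ := fun i => ζ * ‖F' i - F i‖ with ht
  have ht0 : ∀ i, 0 ≤ t i := fun i => mul_nonneg hζ0 (norm_nonneg _)
  have key : ∀ i j, a i j * ⟪ζ • (F' j - F j), ζ • (F' i - F i)⟫ - 2 * A * Z * C * H * t j -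
      A * M * H * t i - 2 * A * M * Z * C * H ^ 2 ≤
      a' i j * ⟪F' j, p i⟫ - a i j * ⟪F j, p i⟫ := by
    intro i j
    have e : a' i j * ⟪F' j, p i⟫ - a i j * ⟪F j, p i⟫ =
        a i j * ⟪ζ • (F' j - F j), ζ • (F' i - F i)⟫ +
        (2 * ζ * (a i j * dζ i)) * ⟪F' j - F j, w⟫ +
        ((a' i j - a i j) * ζ ^ 2) * ⟪F' j, F' i - F i⟫ +
        (2 * ζ * ((a' i j - a i j) * dζ i)) * ⟪F' j, w⟫ := by
      rw [hp]
      simp only [inner_add_right, inner_sub_left, inner_sub_right, real_inner_smul_left,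
        real_inner_smul_right]
      ring
    have b1 : |(2 * ζ * (a i j * dζ i)) * ⟪F' j - F j, w⟫| ≤ 2 * A * Z * C * H * t j := by
      rw [abs_mul, abs_mul, abs_mul (a i j), abs_of_nonneg (by positivity : 0 ≤ 2 * ζ)]
      calc _ ≤ 2 * ζ * (A * Z) * (‖F' j - F j‖ * (C * H)) := by
            gcongr
            · exact ha i j
            · exact hdζ i
            · exact (abs_real_inner_le_norm _ _).trans (by gcongr)
        _ = _ := by simp only [ht]; ring
    have b2 : |((a' i j - a i j) * ζ ^ 2) * ⟪F' j, F' i - F i⟫| ≤ A * M * H * t i := by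
      rw [abs_mul, abs_mul, abs_of_nonneg (by positivity : 0 ≤ ζ ^ 2)]
      calc _ ≤ A * H * ζ * (M * ‖F' i - F i‖) := by
            gcongr
            · exact haa i j
            · nlinarith
            · exact (abs_real_inner_le_norm _ _).trans (by gcongr; exact hF j)
        _ = _ := by simp only [ht]; ring
    have b3 : |(2 * ζ * ((a' i j - a i j) * dζ i)) * ⟪F' j, w⟫| ≤
        2 * A * M * Z * C * H ^ 2 := by
      rw [abs_mul, abs_mul, abs_mul (a' i j - a i j), abs_of_nonneg (by positivity : 0 ≤ 2 * ζ)]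
      calc _ ≤ 2 * 1 * (A * H * Z) * (M * (C * H)) := by
            gcongr
            · exact haa i j
            · exact hdζ i
            · exact (abs_real_inner_le_norm _ _).trans (by gcongr; exact hF j)
        _ = _ := by ring
    rw [e]
    linarith [(abs_le.1 b1).1, (abs_le.1 b2).1, (abs_le.1 b3).1]
  refine le_trans ?_ (Finset.sum_le_sum fun i _ => Finset.sum_le_sum fun j _ => key i j)
  have hell' := sum_norm_sq_le_of_elliptic hell fun i => ζ • (F' i - F i)
  simp only [norm_smul, Real.norm_eq_abs, abs_of_nonneg hζ0] at hell'
  have hsum : ∀ i, N * (2 * A * Z * C + A * M) * H * t i ≤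
      c / 2 * t i ^ 2 + (N * (2 * A * Z * C + A * M) * H) ^ 2 / (2 * c) :=
    fun i => mul_le_half_sq_add hc
  have hsum' := Finset.sum_le_sum fun i (_ : i ∈ Finset.univ) => hsum i
  simp only [Finset.sum_add_distrib, ← Finset.mul_sum, Finset.sum_const, Finset.card_univ,
    nsmul_eq_mul, Finset.sum_sub_distrib] at hsum' ⊢
  change _ ≤ c / 2 * ∑ i, t i ^ 2 + N * _ at hsum'
  have e1 : N * ((N * (2 * A * Z * C + A * M) * H) ^ 2 / (2 * c)) =
    N * (N * (2 * A * Z * C + A * M)) ^ 2 / (2 * c) * H ^ 2 := by ring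
  rw [e1] at hsum'
  change c * ∑ i, t i ^ 2 ≤ _ at hell'
  simp only [← hN]
  change c / 2 * ∑ i, t i ^ 2 - _ ≤ _
  linarith

variable {V : Type*} [NormedAddCommGroup V] [NormedSpace ℝ V]
  [FiniteDimensional ℝ V] [MeasurableSpace V] [BorelSpace V]
  (μ : Measure V) [μ.IsAddHaarMeasure] [DecidableEq ι]

theorem LipschitzWith.smul_of_bounded {f : V → ℝ} {w : V → W} {C D : ℝ≥0} {A B : ℝ}
    (hf : LipschitzWith C f) (hw : LipschitzWith D w) (hA : ∀ x, |f x| ≤ A)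
    (hB : ∀ x, ‖w x‖ ≤ B) : ∃ E, LipschitzWith E fun x => f x • w x := by
  have hA0 : 0 ≤ A := (abs_nonneg _).trans (hA 0)
  have hB0 : 0 ≤ B := (norm_nonneg _).trans (hB 0)
  refine ⟨C * B.toNNReal + A.toNNReal * D, LipschitzWith.of_dist_le_mul fun x y => ?_⟩
  have h1 : f x • w x - f y • w y = (f x - f y) • w x + f y • (w x - w y) := by
    rw [sub_smul, smul_sub]; abel
  rw [dist_eq_norm, h1]
  refine (norm_add_le _ _).trans ?_
  rw [norm_smul, norm_smul]
  push_cast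
  rw [Real.coe_toNNReal _ hA0, Real.coe_toNNReal _ hB0, add_mul]
  have h2 : ‖f x - f y‖ ≤ C * dist x y := by rw [← dist_eq_norm]; exact hf.dist_le_mul x y
  have h3 : ‖w x - w y‖ ≤ D * dist x y := by rw [← dist_eq_norm]; exact hw.dist_le_mul x y
  refine add_le_add ?_ ?_
  · calc _ ≤ (C * dist x y) * B := by gcongr; exact hB x
      _ = _ := by ring
  · calc _ ≤ A * (D * dist x y) := by gcongr; exact hA y
      _ = _ := by ring

/-- Caccioppoli estimate for differences of a Lipschitz map whose cofactors are linear in its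
differential with Lipschitz elliptic coefficients. -/
theorem LipschitzWith.exists_setIntegral_norm_sq_fderiv_sub_le (η : W [⋀^ι]→L[ℝ] ℝ) (b : ι → V)
    {C : ℝ≥0} {Φ : V → W} (hΦ : LipschitzWith C Φ) {a : ι → ι → V → ℝ} {A c r : ℝ} {x₀ : V}
    (hr : 0 < r) (hc : 0 < c) (hA : ∀ i j x, |a i j x| ≤ A)
    (hAL : ∀ i j x y, |a i j x - a i j y| ≤ A * ‖x - y‖)
    (hell : ∀ x ∈ Metric.ball x₀ (3 * r), ∀ y : ι → ℝ,
      c * ∑ i, y i ^ 2 ≤ ∑ i, ∑ j, a i j x * (y j * y i))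
    (ha : ∀ᵐ x ∂μ, x ∈ Metric.ball x₀ (3 * r) → ∀ i w,
      η (Function.update (fun j => fderiv ℝ Φ x (b j)) i w) =
        ∑ j, a i j x * ⟪fderiv ℝ Φ x (b j), w⟫) :
    ∃ K : ℝ, 0 ≤ K ∧ ∀ h : V, ‖h‖ < r → ∫ x in Metric.closedBall x₀ r,
      ∑ i, ‖fderiv ℝ Φ (x + h) (b i) - fderiv ℝ Φ x (b i)‖ ^ 2 ∂μ ≤ K * ‖h‖ ^ 2 := by
  rcases isEmpty_or_nonempty ι with hι | ⟨⟨i₀⟩⟩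
  · exact ⟨0, le_rfl, fun h _ => by simp⟩
  have hA0 : 0 ≤ A := (abs_nonneg _).trans (hA i₀ i₀ 0)
  let ζ : ContDiffBump x₀ := ⟨r, 2 * r, hr, by linarith⟩
  have hζC : ContDiff ℝ 1 ζ := ζ.contDiff
  obtain ⟨D, hζL⟩ := ContDiff.lipschitzWith_of_hasCompactSupport ζ.hasCompactSupport hζC (by simp)
  obtain ⟨D₂, hζ2L⟩ := ContDiff.lipschitzWith_of_hasCompactSupport (f := fun x => ζ x ^ 2)
    (𝕂 := ℝ) (n := 1)
    (ζ.hasCompactSupport.mono fun x hx => by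
      contrapose! hx; simp only [Function.mem_support, not_not] at hx ⊢; simp [hx])
    (hζC.pow 2) (by simp)
  set S := ∑ j, ‖b j‖ with hS
  have hb : ∀ j, ‖b j‖ ≤ S := fun j =>
    Finset.single_le_sum (f := fun j => ‖b j‖) (fun _ _ => norm_nonneg _) (Finset.mem_univ j)
  have hS0 : 0 ≤ S := Finset.sum_nonneg fun _ _ => norm_nonneg _
  obtain ⟨K₀, hK₀⟩ : ∃ K₀ : ℝ, K₀ =
    (Fintype.card ι * (Fintype.card ι * (2 * A * (D * S) * C + A * (C * S))) ^ 2 / (2 * c) +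
        Fintype.card ι ^ 2 * (2 * A * (C * S) * (D * S) * C)) := ⟨_, rfl⟩
  have hK₀0 : 0 ≤ K₀ := by rw [hK₀]; positivity
  set B₂ := Metric.closedBall x₀ (2 * r) with hB₂
  have hB₂c : IsCompact B₂ := isCompact_closedBall _ _
  refine ⟨2 / c * (K₀ * μ.real B₂), by positivity, fun h hh => ?_⟩
  set w : V → W := fun x => Φ (x + h) - Φ x with hw
  have hΦh : LipschitzWith C fun x => Φ (x + h) := LipschitzWith.of_dist_le_mul fun x y => by
    simpa using hΦ.dist_le_mul (x + h) (y + h)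
  have hwL : LipschitzWith (C + C) w := hΦh.sub hΦ
  have hwb : ∀ x, ‖w x‖ ≤ C * ‖h‖ := fun x => by
    have := hΦ.dist_le_mul (x + h) x
    rwa [dist_eq_norm, dist_eq_norm, add_sub_cancel_left] at this
  obtain ⟨E, hφL⟩ := hζ2L.smul_of_bounded hwL (A := 1)
    (fun x => by rw [abs_of_nonneg (sq_nonneg _)]; exact pow_le_one₀ ζ.nonneg ζ.le_one) hwb
  set φ : V → W := fun x => ζ x ^ 2 • w x with hφ
  have hφc : HasCompactSupport φ := ζ.hasCompactSupport.mono fun x hx => by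
    contrapose! hx; simp only [Function.mem_support, not_not] at hx ⊢; simp [hφ, hx]
  have hφts : tsupport φ ⊆ B₂ := by
    rw [hB₂, ← ζ.tsupport_eq]
    refine closure_mono fun x hx => ?_
    contrapose! hx; simp only [Function.mem_support, not_not] at hx ⊢; simp [hφ, hx]
  have hi1 := hΦ.integrable_alternating_fderiv μ η b hφL hφc h
  have hi0 := hΦ.integrable_alternating_fderiv μ η b hφL hφc 0
  have hz1 := hΦh.integral_alternating_fderiv_eq_zero μ η b hφL hφc
  have hz0 := hΦ.integral_alternating_fderiv_eq_zero μ η b hφL hφc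
  simp_rw [fderiv_comp_add_right] at hz1
  simp_rw [add_zero] at hi0
  have hB₂i : Integrable (B₂.indicator fun _ => K₀ * ‖h‖ ^ 2) μ :=
    (integrable_indicator_iff hB₂c.measurableSet).2
      (continuous_const.continuousOn.integrableOn_compact hB₂c)
  have hmain : ∫ x, c / 2 * (Metric.closedBall x₀ r).indicator (fun x =>
      ∑ i, ‖fderiv ℝ Φ (x + h) (b i) - fderiv ℝ Φ x (b i)‖ ^ 2) x ∂μ ≤
      ∫ x, ((∑ i, η (Function.update (fun j => fderiv ℝ Φ (x + h) (b j)) i (fderiv ℝ φ x (b i)))) -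
        ∑ i, η (Function.update (fun j => fderiv ℝ Φ x (b j)) i (fderiv ℝ φ x (b i))) +
        B₂.indicator (fun _ => K₀ * ‖h‖ ^ 2) x) ∂μ := by
    refine integral_mono_of_nonneg (.of_forall fun x => ?_) ((hi1.sub hi0).add hB₂i) ?_
    · exact mul_nonneg (by positivity) (indicator_nonneg (fun x _ => by positivity) x)
    have hdiff := hΦ.ae_differentiableAt (μ := μ)
    have hq : Measure.QuasiMeasurePreserving (fun x : V => x + h) μ μ :=
      (measurePreserving_add_right μ h).quasiMeasurePreserving
    filter_upwards [hdiff, hq.ae hdiff, ha, hq.ae ha] with x hd hd' hax hax'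
    by_cases hx : x ∈ B₂
    · have hx3 : x ∈ Metric.ball x₀ (3 * r) :=
        Metric.closedBall_subset_ball (by linarith) hx
      have hx3' : x + h ∈ Metric.ball x₀ (3 * r) := by
        rw [Metric.mem_ball]
        have h1 : dist (x + h) x = ‖h‖ := by simp [dist_eq_norm]
        have := dist_triangle (x + h) x x₀
        have := Metric.mem_closedBall.1 hx
        linarith
      have hdw : HasFDerivAt w (fderiv ℝ Φ (x + h) - fderiv ℝ Φ x) x := by
        refine HasFDerivAt.sub ?_ hd.hasFDerivAt
        simpa [Function.comp_def] using
          hd'.hasFDerivAt.comp x ((hasFDerivAt_id x).add_const h)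
      have hdζ : HasFDerivAt ζ (fderiv ℝ ζ x) x := (hζC.differentiable (by simp) x).hasFDerivAt
      have hdφ := ((hdζ.pow 2).smul hdw).fderiv
      have hp : ∀ i, fderiv ℝ φ x (b i) =
          ζ x ^ 2 • (fderiv ℝ Φ (x + h) (b i) - fderiv ℝ Φ x (b i)) +
          (2 * ζ x * fderiv ℝ ζ x (b i)) • w x := by
        intro i
        have : fderiv ℝ φ x = _ := hdφ
        rw [this]
        simp
      have := caccioppoli_pointwise (a := fun i j => a i j x) (a' := fun i j => a i j (x + h))
        (A := A) (c := c) (M := C * S) (Z := D * S) (C := C) (H := ‖h‖) (ζ := ζ x)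
        (F := fun i => fderiv ℝ Φ x (b i)) (F' := fun i => fderiv ℝ Φ (x + h) (b i))
        (p := fun i => fderiv ℝ φ x (b i)) (dζ := fun i => fderiv ℝ ζ x (b i)) (w := w x)
        hc hA0 (by positivity) (by positivity) (by positivity) ζ.nonneg ζ.le_one
        (fun i j => hA i j x) (fun i j => by simpa using hAL i j (x + h) x) (hell x hx3)
        (fun i => (hΦ.norm_fderiv_apply_le _ _).trans
          (mul_le_mul_of_nonneg_left (hb i) C.coe_nonneg))
        (fun i => (hζL.norm_fderiv_apply_le _ _).trans
          (mul_le_mul_of_nonneg_left (hb i) D.coe_nonneg)) (hwb x) hp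
      rw [← hK₀] at this
      rw [indicator_of_mem hx]
      simp_rw [hax hx3, hax' hx3']
      simp_rw [Finset.sum_sub_distrib] at this
      refine le_trans ?_ (sub_le_iff_le_add.1 this)
      refine mul_le_mul_of_nonneg_left ?_ (by positivity)
      by_cases hxr : x ∈ Metric.closedBall x₀ r
      · rw [indicator_of_mem hxr, ζ.one_of_mem_closedBall hxr]
        simp
      · rw [indicator_of_notMem hxr]
        positivity
    · have hx' : x ∉ Metric.closedBall x₀ r := fun h' =>
        hx (Metric.closedBall_subset_closedBall (by linarith) h')
      have h0 : fderiv ℝ φ x = 0 := by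
        rw [← Function.notMem_support]
        exact fun h => hx (hφts (support_fderiv_subset ℝ h))
      rw [indicator_of_notMem hx, indicator_of_notMem hx', h0]
      refine le_of_eq ?_
      have : ∀ (m : ι → W) i, η (Function.update m i 0) = 0 := fun m i =>
        η.map_coord_zero i (by simp)
      simp [this]
  have hadd := integral_add (hi1.sub hi0) hB₂i
  simp only [Pi.sub_apply] at hadd
  rw [hadd, integral_sub hi1 hi0, hz1, hz0,
    integral_const_mul, integral_indicator Metric.isClosed_closedBall.measurableSet,
    integral_indicator hB₂c.measurableSet] at hmain
  simp only [sub_zero, zero_add, setIntegral_const, smul_eq_mul] at hmain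
  have h2c : 0 < 2 / c := by positivity
  calc _ = 2 / c * (c / 2 * ∫ x in Metric.closedBall x₀ r,
      ∑ i, ‖fderiv ℝ Φ (x + h) (b i) - fderiv ℝ Φ x (b i)‖ ^ 2 ∂μ) := by
        field_simp
    _ ≤ 2 / c * (μ.real B₂ * (K₀ * ‖h‖ ^ 2)) := by gcongr
    _ = _ := by ring

end Caccioppoli

section WeakLimits

variable {V : Type*} [NormedAddCommGroup V] [NormedSpace ℝ V]
  [FiniteDimensional ℝ V] [MeasurableSpace V] [BorelSpace V]
  (μ : Measure V) [μ.IsAddHaarMeasure]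
  {W : Type*} [NormedAddCommGroup W] [InnerProductSpace ℝ W] [FiniteDimensional ℝ W]

theorem integrable_of_bounded_of_support_subset {A : Type*} [NormedAddCommGroup A]
    {g : V → A} (hm : AEStronglyMeasurable g μ) {M : ℝ} (hM : ∀ x, ‖g x‖ ≤ M) {K : Set V}
    (hK : IsCompact K) (h0 : ∀ x ∉ K, g x = 0) : Integrable g μ := by
  have hint : Integrable (K.indicator fun _ => M) μ :=
    (integrable_indicator_iff hK.measurableSet).2
      (continuous_const.continuousOn.integrableOn_compact hK)
  refine hint.mono' hm (.of_forall fun x => ?_)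
  by_cases hx : x ∈ K
  · rw [indicator_of_mem hx]; exact hM x
  · rw [indicator_of_notMem hx, h0 x hx, norm_zero]

variable {μ} in
theorem integrable_inner_of_bounded {Y Ψ : V → W} (hY : AEStronglyMeasurable Y μ)
    (hΨ : AEStronglyMeasurable Ψ μ) {M N : ℝ} (hYM : ∀ x, ‖Y x‖ ≤ M) (hΨN : ∀ x, ‖Ψ x‖ ≤ N)
    {K : Set V} (hK : IsCompact K) (h0 : ∀ x ∉ K, Ψ x = 0) :
    Integrable (fun x => ⟪Y x, Ψ x⟫) μ := by
  refine integrable_of_bounded_of_support_subset μ (hY.inner hΨ) (M := M * N) (fun x => ?_) hK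
    fun x hx => by simp [h0 x hx]
  exact (norm_inner_le_norm _ _).trans
    (mul_le_mul (hYM x) (hΨN x) (norm_nonneg _) ((norm_nonneg _).trans (hYM x)))

/-- The inner product of a real inner product space as a continuous bilinear map. -/
noncomputable def innerCLM : W →L[ℝ] W →L[ℝ] ℝ := innerSL ℝ

theorem innerCLM_apply (x y : W) : innerCLM x y = ⟪x, y⟫ := rfl

variable {μ} in
theorem aestronglyMeasurable_diffQuot {F : V → W} (hF : AEStronglyMeasurable F μ) (v : V) (t : ℝ) :
    AEStronglyMeasurable (diffQuot v t F) μ := by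
  have hq : Measure.QuasiMeasurePreserving (fun x : V => x + t • v) μ μ :=
    (measurePreserving_add_right μ _).quasiMeasurePreserving
  exact ((hF.comp_quasiMeasurePreserving hq).sub hF).const_smul _

theorem norm_diffQuot_le_of_bounded {F : V → W} {M : ℝ} (hF : ∀ x, ‖F x‖ ≤ M) (v : V) (t : ℝ)
    (x : V) : ‖diffQuot v t F x‖ ≤ |t⁻¹| * (M + M) := by
  rw [diffQuot, norm_smul, Real.norm_eq_abs]
  exact mul_le_mul_of_nonneg_left ((norm_sub_le _ _).trans (add_le_add (hF _) (hF _)))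
    (abs_nonneg _)

theorem tendsto_neg_nhdsNE_zero : Tendsto (fun t : ℝ => -t) (𝓝[≠] 0) (𝓝[≠] 0) := by
  refine tendsto_nhdsWithin_iff.2 ⟨?_, ?_⟩
  · have : Tendsto (fun t : ℝ => -t) (𝓝 0) (𝓝 (-0)) := tendsto_id.neg
    rw [_root_.neg_zero] at this
    exact this.mono_left nhdsWithin_le_nhds
  · filter_upwards [self_mem_nhdsWithin] with t ht using by simpa using ht

theorem tendsto_integral_inner_diffQuot {F : V → W} (hF : AEStronglyMeasurable F μ) {M : ℝ}
    (hM : ∀ x, ‖F x‖ ≤ M) {D : ℝ≥0} {Ψ : V → W} (hΨ : LipschitzWith D Ψ)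
    (hΨc : HasCompactSupport Ψ) (v : V) :
    Tendsto (fun t => ∫ x, ⟪diffQuot v t F x, Ψ x⟫ ∂μ) (𝓝[≠] 0)
      (𝓝 (-∫ x, ⟪F x, fderiv ℝ Ψ x v⟫ ∂μ)) := by
  have h1 := ((hΨ.tendsto_integral_bilin_diffQuot_right μ innerCLM
    (locallyIntegrable_of_bounded hF hM) hΨc v).comp tendsto_neg_nhdsNE_zero).neg
  simp only [innerCLM_apply] at h1
  refine h1.congr fun t => ?_
  obtain ⟨N, hN⟩ := hΨ.continuous.bounded_above_of_compact_support hΨc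
  have hq : Measure.QuasiMeasurePreserving (fun x : V => x + t • v) μ μ :=
    (measurePreserving_add_right μ _).quasiMeasurePreserving
  have h0 : ∀ x ∉ tsupport Ψ, Ψ x = 0 := fun x hx => image_eq_zero_of_notMem_tsupport hx
  have := integral_bilin_diffQuot μ innerCLM (f := F) (g := Ψ) v t
    (by
      simp only [innerCLM_apply]
      exact integrable_inner_of_bounded hF hΨ.continuous.aestronglyMeasurable hM hN hΨc h0)
    (by
      simp only [innerCLM_apply]
      exact integrable_inner_of_bounded (hF.comp_quasiMeasurePreserving hq)
        hΨ.continuous.aestronglyMeasurable (fun x => hM _) hN hΨc h0)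
  simp only [innerCLM_apply] at this
  simp only [Function.comp_apply, this]

theorem LipschitzWith.tendsto_integral_inner_diffQuot_fderiv {C D : ℝ≥0} {Φ Ψ : V → W}
    (hΦ : LipschitzWith C Φ) (hΨ : LipschitzWith D Ψ) (hΨc : HasCompactSupport Ψ) (u v : V) :
    Tendsto (fun t => ∫ x, ⟪diffQuot v t (fun y => fderiv ℝ Φ y u) x, Ψ x⟫ ∂μ) (𝓝[≠] 0)
      (𝓝 (-∫ x, ⟪fderiv ℝ Φ x v, fderiv ℝ Ψ x u⟫ ∂μ)) := by
  have hi : Integrable (fun x => fderiv ℝ Ψ x u) μ :=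
    integrable_of_bounded_of_support_subset μ (aestronglyMeasurable_fderiv_apply Ψ u)
      (hΨ.norm_fderiv_apply_le · u) hΨc fun x hx => by
        rw [Function.notMem_support.1 fun h => hx (support_fderiv_subset ℝ h)]; rfl
  have h1 := (hΦ.tendsto_integral_bilin_diffQuot μ innerCLM hi v).neg
  simp only [innerCLM_apply] at h1
  refine h1.congr fun t => ?_
  have hΦt : LipschitzWith C fun x => Φ (x + t • v) := LipschitzWith.of_dist_le_mul fun x y => by
    simpa using hΦ.dist_le_mul (x + t • v) (y + t • v)
  have hL : LipschitzWith (‖t⁻¹‖₊ * (C + C)) (diffQuot v t Φ) :=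
    ((lipschitzWith_smul t⁻¹).comp (hΦt.sub hΦ) :)
  have := hL.integral_bilin_fderiv μ innerCLM hΨ hΨc u
  simp only [innerCLM_apply] at this
  rw [← this]
  refine integral_congr_ae ?_
  have hq : Measure.QuasiMeasurePreserving (fun x : V => x + t • v) μ μ :=
    (measurePreserving_add_right μ _).quasiMeasurePreserving
  filter_upwards [hΦ.ae_differentiableAt (μ := μ), hq.ae (hΦ.ae_differentiableAt (μ := μ))]
    with x hd hd'
  have h2 : HasFDerivAt (diffQuot v t Φ) (t⁻¹ • (fderiv ℝ Φ (x + t • v) - fderiv ℝ Φ x)) x := by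
    refine (HasFDerivAt.sub ?_ hd.hasFDerivAt).const_smul _
    simpa [Function.comp_def] using
      hd'.hasFDerivAt.comp x ((hasFDerivAt_id x).add_const (t • v))
  rw [h2.fderiv]
  rfl

theorem LipschitzWith.tendsto_integral_inner_diffQuot_fderiv_sub {C D : ℝ≥0} {Φ Ψ : V → W}
    (hΦ : LipschitzWith C Φ) (hΨ : LipschitzWith D Ψ) (hΨc : HasCompactSupport Ψ) (u v : V) :
    Tendsto (fun t => ∫ x, ⟪diffQuot v t (fun y => fderiv ℝ Φ y u) x -
      diffQuot u t (fun y => fderiv ℝ Φ y v) x, Ψ x⟫ ∂μ) (𝓝[≠] 0) (𝓝 0) := by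
  have h1 := hΦ.tendsto_integral_inner_diffQuot_fderiv μ hΨ hΨc u v
  have h2 := tendsto_integral_inner_diffQuot μ (aestronglyMeasurable_fderiv_apply Φ v)
    (hΦ.norm_fderiv_apply_le · v) hΨ hΨc u
  have h3 := h1.sub h2
  rw [sub_self] at h3
  refine h3.congr fun t => ?_
  obtain ⟨N, hN⟩ := hΨ.continuous.bounded_above_of_compact_support hΨc
  have hint : ∀ u v, Integrable
      (fun x => ⟪diffQuot v t (fun y => fderiv ℝ Φ y u) x, Ψ x⟫) μ := fun u v =>
    integrable_inner_of_bounded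
      (aestronglyMeasurable_diffQuot (aestronglyMeasurable_fderiv_apply Φ u) v t)
      hΨ.continuous.aestronglyMeasurable
      (norm_diffQuot_le_of_bounded (hΦ.norm_fderiv_apply_le · u) v t) hN hΨc
      fun x hx => image_eq_zero_of_notMem_tsupport hx
  rw [← integral_sub (hint u v) (hint v u)]
  simp_rw [inner_sub_left]

/-- Weak convergence to zero may be tested on Lipschitz functions, for families bounded
in `L²` on a ball. -/
theorem tendsto_integral_inner_zero_of_lipschitz {T : Type*} {l : Filter T} {Y : T → V → W}
    {x₀ : V} {r s K M : ℝ} (hsr : s < r)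
    (hYm : ∀ t, AEStronglyMeasurable (Y t) μ) (hYb : ∀ t, ∃ N, ∀ x, ‖Y t x‖ ≤ N)
    (hYK : ∀ᶠ t in l, ∫ x in Metric.closedBall x₀ r, ‖Y t x‖ ^ 2 ∂μ ≤ K)
    (hY : ∀ (D : ℝ≥0) (Ψ : V → W), LipschitzWith D Ψ → HasCompactSupport Ψ →
      Tendsto (fun t => ∫ x, ⟪Y t x, Ψ x⟫ ∂μ) l (𝓝 0))
    {Ψ : V → W} (hΨm : AEStronglyMeasurable Ψ μ) (hΨM : ∀ x, ‖Ψ x‖ ≤ M)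
    (hΨ0 : ∀ x ∉ Metric.closedBall x₀ s, Ψ x = 0) :
    Tendsto (fun t => ∫ x, ⟪Y t x, Ψ x⟫ ∂μ) l (𝓝 0) := by
  obtain ⟨ρ, hρ0, hρr, -⟩ := exists_contDiffBump_seq V
  set B := Metric.closedBall x₀ r with hB
  have hBc : IsCompact B := isCompact_closedBall _ _
  have hsB : Metric.closedBall x₀ s ⊆ B := Metric.closedBall_subset_closedBall hsr.le
  have hΨB : ∀ x ∉ B, Ψ x = 0 := fun x hx => hΨ0 x fun h => hx (hsB h)
  have hΨl : LocallyIntegrable Ψ μ := locallyIntegrable_of_bounded hΨm hΨM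
  set P : ℕ → V → W := fun n => (ρ n).normed μ ⋆[ContinuousLinearMap.lsmul ℝ ℝ, μ] Ψ with hP
  have hPM : ∀ n x, ‖P n x‖ ≤ M := fun n x => (ρ n).norm_convolution_le fun y _ => hΨM y
  have hPB : ∀ᶠ n in atTop, ∀ x ∉ B, P n x = 0 := by
    filter_upwards [hρ0.eventually (gt_mem_nhds (sub_pos.2 hsr))] with n hn x hx
    rw [← norm_le_zero_iff]
    refine (ρ n).norm_convolution_le fun y hy => ?_
    rw [hΨ0, norm_zero]
    intro hys
    refine hx (Metric.mem_closedBall.2 ?_)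
    have := dist_triangle x y x₀
    have := Metric.mem_ball'.1 hy
    have := Metric.mem_closedBall.1 hys
    linarith
  have hΨc : HasCompactSupport Ψ := HasCompactSupport.intro hBc hΨB
  have hPC : ∀ n, ContDiff ℝ 1 (P n) := fun n =>
    (ρ n).hasCompactSupport_normed.contDiff_convolution_left (n := 1) _ (ρ n).contDiff_normed hΨl
  have hPc : ∀ n, HasCompactSupport (P n) := fun n =>
    (ρ n).hasCompactSupport_normed.convolution _ hΨc
  have hDm : ∀ n, AEStronglyMeasurable (fun x => Ψ x - P n x) μ := fun n =>
    hΨm.sub (hPC n).continuous.aestronglyMeasurable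
  have hDM : ∀ n x, ‖Ψ x - P n x‖ ≤ M + M := fun n x =>
    (norm_sub_le _ _).trans (add_le_add (hΨM x) (hPM n x))
  have hE : Tendsto (fun n => ∫ x in B, ‖Ψ x - P n x‖ ^ 2 ∂μ) atTop (𝓝 0) := by
    have : Tendsto (fun n => ∫ x in B, ‖Ψ x - P n x‖ ^ 2 ∂μ) atTop (𝓝 (∫ x in B, (0 : ℝ) ∂μ)) := by
      refine tendsto_integral_of_dominated_convergence (fun _ => (M + M) ^ 2)
        (fun n => ((hDm n).norm.pow 2).restrict) ?_ (fun n => .of_forall fun x => ?_) ?_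
      · exact continuous_const.continuousOn.integrableOn_compact hBc
      · rw [Real.norm_eq_abs, abs_of_nonneg (sq_nonneg _)]
        exact pow_le_pow_left₀ (norm_nonneg _) (hDM n x) 2
      · refine ae_restrict_of_ae ?_
        filter_upwards [ContDiffBump.ae_convolution_tendsto_right_of_locallyIntegrable hρ0
          (.of_forall hρr) hΨl] with x hx
        have := ((tendsto_const_nhds (x := Ψ x)).sub hx).norm.pow 2
        simpa using this
    simpa using this
  rw [Metric.tendsto_nhds]
  intro ε hε
  have hKp : 0 < |K| + 1 := by positivity
  set δ : ℝ := ε / (2 * (|K| + 1)) with hδ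
  have hδ0 : 0 < δ := by positivity
  obtain ⟨n, hn, hnB⟩ := ((hE.eventually (gt_mem_nhds
    (show (0 : ℝ) < δ * ε / 2 by positivity))).and hPB).exists
  obtain ⟨D, hD⟩ := ContDiff.lipschitzWith_of_hasCompactSupport (hPc n) (hPC n) (by simp)
  filter_upwards [hYK, (Metric.tendsto_nhds.1 (hY D (P n) hD (hPc n))) (ε / 2) (by positivity)]
    with t htK ht
  obtain ⟨N, hN⟩ := hYb t
  rw [dist_zero_right] at ht ⊢
  have hi1 : Integrable (fun x => ⟪Y t x, P n x⟫) μ := integrable_inner_of_bounded (hYm t)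
    (hPC n).continuous.aestronglyMeasurable hN (hPM n) hBc hnB
  have hi2 : Integrable (fun x => ⟪Y t x, Ψ x - P n x⟫) μ := integrable_inner_of_bounded (hYm t)
    (hDm n) hN (hDM n) hBc fun x hx => by rw [hΨB x hx, hnB x hx, sub_zero]
  have hsplit : ∫ x, ⟪Y t x, Ψ x⟫ ∂μ =
      ∫ x, ⟪Y t x, P n x⟫ ∂μ + ∫ x in B, ⟪Y t x, Ψ x - P n x⟫ ∂μ := by
    rw [setIntegral_eq_integral_of_forall_compl_eq_zero, ← integral_add hi1 hi2]
    · simp_rw [← inner_add_right]; simp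
    · intro x hx; rw [hΨB x hx, hnB x hx]; simp
  have hiY : IntegrableOn (fun x => ‖Y t x‖ ^ 2) B μ :=
    Measure.integrableOn_of_bounded hBc.measure_lt_top.ne ((hYm t).norm.pow 2)
      (M := N ^ 2) (.of_forall fun x => by
        rw [Real.norm_eq_abs, abs_of_nonneg (sq_nonneg _)]
        exact pow_le_pow_left₀ (norm_nonneg _) (hN x) 2)
  have hiD : IntegrableOn (fun x => ‖Ψ x - P n x‖ ^ 2) B μ :=
    Measure.integrableOn_of_bounded hBc.measure_lt_top.ne ((hDm n).norm.pow 2)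
      (M := (M + M) ^ 2) (.of_forall fun x => by
        rw [Real.norm_eq_abs, abs_of_nonneg (sq_nonneg _)]
        exact pow_le_pow_left₀ (norm_nonneg _) (hDM n x) 2)
  have hbound : ‖∫ x in B, ⟪Y t x, Ψ x - P n x⟫ ∂μ‖ ≤
      ∫ x in B, (δ / 2 * ‖Y t x‖ ^ 2 + 1 / (2 * δ) * ‖Ψ x - P n x‖ ^ 2) ∂μ := by
    refine norm_integral_le_of_norm_le ((hiY.const_mul _).add (hiD.const_mul _))
      (.of_forall fun x => (norm_inner_le_norm _ _).trans ?_)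
    have := mul_le_half_sq_add (c := δ) (κ := ‖Ψ x - P n x‖) (t := ‖Y t x‖) hδ0
    exact (mul_comm _ _).trans_le (this.trans_eq (by ring))
  rw [integral_add (hiY.const_mul _) (hiD.const_mul _), integral_const_mul,
    integral_const_mul] at hbound
  have h1 : δ / 2 * ∫ x in B, ‖Y t x‖ ^ 2 ∂μ ≤ ε / 4 := by
    calc _ ≤ δ / 2 * (|K| + 1) := by
          gcongr
          linarith [le_abs_self K]
      _ = ε / 4 := by rw [hδ]; field_simp; norm_num
  have h2 : 1 / (2 * δ) * ∫ x in B, ‖Ψ x - P n x‖ ^ 2 ∂μ < ε / 4 := by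
    calc _ < 1 / (2 * δ) * (δ * ε / 2) := by gcongr
      _ = ε / 4 := by field_simp; norm_num
  rw [hsplit]
  refine (norm_add_le _ _).trans_lt ?_
  linarith

end WeakLimits

section Koszul

variable {V : Type*} [NormedAddCommGroup V] [NormedSpace ℝ V]
  [FiniteDimensional ℝ V] [MeasurableSpace V] [BorelSpace V]
  (μ : Measure V) [μ.IsAddHaarMeasure]
  {W : Type*} [NormedAddCommGroup W] [InnerProductSpace ℝ W] [FiniteDimensional ℝ W]
  {ι : Type*} [Fintype ι]

theorem integrableOn_norm_sq_of_bounded {Y : V → W} (hY : AEStronglyMeasurable Y μ) {N : ℝ}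
    (hN : ∀ x, ‖Y x‖ ≤ N) {K : Set V} (hK : IsCompact K) :
    IntegrableOn (fun x => ‖Y x‖ ^ 2) K μ :=
  Measure.integrableOn_of_bounded hK.measure_lt_top.ne (hY.norm.pow 2)
    (M := N ^ 2) (.of_forall fun x => by
      rw [Real.norm_eq_abs, abs_of_nonneg (sq_nonneg _)]
      exact pow_le_pow_left₀ (norm_nonneg _) (hN x) 2)

theorem LipschitzWith.eventually_setIntegral_norm_sq_diffQuot_fderiv_le {b : ι → V} {C : ℝ≥0}
    {Φ : V → W} (hΦ : LipschitzWith C Φ) {x₀ : V} {r K : ℝ} (hr : 0 < r)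
    (hK : ∀ h : V, ‖h‖ < r → ∫ x in Metric.closedBall x₀ r,
      ∑ i, ‖fderiv ℝ Φ (x + h) (b i) - fderiv ℝ Φ x (b i)‖ ^ 2 ∂μ ≤ K * ‖h‖ ^ 2) (k i : ι) :
    ∀ᶠ t in 𝓝[≠] (0 : ℝ), ∫ x in Metric.closedBall x₀ r,
      ‖diffQuot (b k) t (fun y => fderiv ℝ Φ y (b i)) x‖ ^ 2 ∂μ ≤ K * ‖b k‖ ^ 2 := by
  have hlim : ∀ᶠ t in 𝓝[≠] (0 : ℝ), ‖t • b k‖ < r := by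
    have : Tendsto (fun t : ℝ => ‖t • b k‖) (𝓝 0) (𝓝 ‖(0 : ℝ) • b k‖) :=
      ((continuous_id.smul continuous_const).norm).tendsto 0
    rw [zero_smul, norm_zero] at this
    exact (this.eventually (gt_mem_nhds hr)).filter_mono nhdsWithin_le_nhds
  filter_upwards [hlim, self_mem_nhdsWithin] with t ht ht0
  have ht0 : t ≠ 0 := ht0
  have hq : Measure.QuasiMeasurePreserving (fun x : V => x + t • b k) μ μ :=
    (measurePreserving_add_right μ _).quasiMeasurePreserving
  calc ∫ x in Metric.closedBall x₀ r,
        ‖diffQuot (b k) t (fun y => fderiv ℝ Φ y (b i)) x‖ ^ 2 ∂μ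
      ≤ ∫ x in Metric.closedBall x₀ r, (t⁻¹) ^ 2 * ∑ i,
        ‖fderiv ℝ Φ (x + t • b k) (b i) - fderiv ℝ Φ x (b i)‖ ^ 2 ∂μ := by
        refine integral_mono_of_nonneg (.of_forall fun x => sq_nonneg _)
          (Integrable.const_mul (integrable_finsetSum _ fun j _ => ?_) _)
          (.of_forall fun x => ?_)
        · refine integrableOn_norm_sq_of_bounded μ (N := C * ‖b j‖ + C * ‖b j‖)
            (((aestronglyMeasurable_fderiv_apply Φ (b j)).comp_quasiMeasurePreserving hq).sub
              (aestronglyMeasurable_fderiv_apply Φ (b j))) (fun x => ?_) (isCompact_closedBall _ _)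
          exact (_root_.norm_sub_le _ _).trans (add_le_add (hΦ.norm_fderiv_apply_le _ _)
            (hΦ.norm_fderiv_apply_le _ _))
        · simp only [diffQuot, norm_smul, mul_pow, Real.norm_eq_abs, sq_abs]
          refine mul_le_mul_of_nonneg_left ?_ (sq_nonneg _)
          exact Finset.single_le_sum (f := fun i =>
            ‖fderiv ℝ Φ (x + t • b k) (b i) - fderiv ℝ Φ x (b i)‖ ^ 2)
            (fun _ _ => sq_nonneg _) (Finset.mem_univ i)
    _ ≤ (t⁻¹) ^ 2 * (K * ‖t • b k‖ ^ 2) := by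
        rw [integral_const_mul]
        exact mul_le_mul_of_nonneg_left (hK _ ht) (sq_nonneg _)
    _ = K * ‖b k‖ ^ 2 := by
        rw [norm_smul, mul_pow, Real.norm_eq_abs, sq_abs]
        field_simp

/-- The Christoffel symbols of the first kind of the metric `G`, in the directions `b`. -/
noncomputable def christoffel (G : ι → ι → V → ℝ) (b : ι → V) (k i j : ι) (x : V) : ℝ :=
  (fderiv ℝ (G i j) x (b k) + fderiv ℝ (G k j) x (b i) - fderiv ℝ (G k i) x (b j)) / 2

variable {b : ι → V} {C : ℝ≥0} {Φ : V → W} (hΦ : LipschitzWith C Φ) {x₀ : V} {r s K : ℝ}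
  (hr : 0 < r) (hsr : s < r)
  (hK : ∀ h : V, ‖h‖ < r → ∫ x in Metric.closedBall x₀ r,
      ∑ i, ‖fderiv ℝ Φ (x + h) (b i) - fderiv ℝ Φ x (b i)‖ ^ 2 ∂μ ≤ K * ‖h‖ ^ 2)
  {G : ι → ι → V → ℝ} (hGL : ∀ i j, ∃ D : ℝ≥0, LipschitzWith D (G i j))
  (hG : ∀ᵐ x ∂μ, x ∈ Metric.ball x₀ (3 * r) → ∀ i j,
    ⟪fderiv ℝ Φ x (b i), fderiv ℝ Φ x (b j)⟫ = G i j x)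
  {ψ : V → ℝ} (hψm : AEStronglyMeasurable ψ μ) {M : ℝ} (hψM : ∀ x, |ψ x| ≤ M)
  (hψ0 : ∀ x ∉ Metric.closedBall x₀ s, ψ x = 0)

include hΦ hr hsr hK hψm hψM hψ0

theorem LipschitzWith.tendsto_integral_mul_inner_diffQuot_comm (k i j : ι) :
    Tendsto (fun t => ∫ x, ψ x * ⟪diffQuot (b k) t (fun y => fderiv ℝ Φ y (b i)) x,
        fderiv ℝ Φ x (b j)⟫ ∂μ - ∫ x, ψ x * ⟪diffQuot (b i) t (fun y => fderiv ℝ Φ y (b k)) x,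
        fderiv ℝ Φ x (b j)⟫ ∂μ) (𝓝[≠] 0) (𝓝 0) := by
  have hm : ∀ u v t, AEStronglyMeasurable (diffQuot u t (fun y => fderiv ℝ Φ y v)) μ :=
    fun u v t => aestronglyMeasurable_diffQuot (aestronglyMeasurable_fderiv_apply Φ v) u t
  have hb : ∀ u v t x, ‖diffQuot u t (fun y => fderiv ℝ Φ y v) x‖ ≤ _ := fun u v t =>
    norm_diffQuot_le_of_bounded (hΦ.norm_fderiv_apply_le · v) u t
  have hB : IsCompact (Metric.closedBall x₀ r) := isCompact_closedBall _ _
  have hM0 : 0 ≤ M := (abs_nonneg _).trans (hψM 0)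
  have hFm := aestronglyMeasurable_fderiv_apply (μ := μ) Φ (b j)
  have h := tendsto_integral_inner_zero_of_lipschitz μ (l := 𝓝[≠] (0 : ℝ)) (x₀ := x₀) (r := r)
    (s := s) (Y := fun t x => diffQuot (b k) t (fun y => fderiv ℝ Φ y (b i)) x -
      diffQuot (b i) t (fun y => fderiv ℝ Φ y (b k)) x)
    (K := 2 * (K * ‖b k‖ ^ 2) + 2 * (K * ‖b i‖ ^ 2)) (M := M * (C * ‖b j‖)) hsr
    (fun t => (hm _ _ t).sub (hm _ _ t))
    (fun t => ⟨_, fun x => (_root_.norm_sub_le _ _).trans (add_le_add (hb _ _ t x) (hb _ _ t x))⟩)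
    (by
      filter_upwards [hΦ.eventually_setIntegral_norm_sq_diffQuot_fderiv_le μ hr hK k i,
        hΦ.eventually_setIntegral_norm_sq_diffQuot_fderiv_le μ hr hK i k] with t h1 h2
      have i1 := integrableOn_norm_sq_of_bounded μ (hm (b k) (b i) t) (hb _ _ t) hB
      have i2 := integrableOn_norm_sq_of_bounded μ (hm (b i) (b k) t) (hb _ _ t) hB
      refine (integral_mono_of_nonneg (.of_forall fun x => sq_nonneg _)
        ((i1.const_mul 2).add (i2.const_mul 2)) (.of_forall fun x => ?_)).trans ?_
      · have p := parallelogram_law_with_norm ℝ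
          (diffQuot (b k) t (fun y => fderiv ℝ Φ y (b i)) x)
          (diffQuot (b i) t (fun y => fderiv ℝ Φ y (b k)) x)
        simp only [Pi.add_apply]
        nlinarith [sq_nonneg ‖diffQuot (b k) t (fun y => fderiv ℝ Φ y (b i)) x +
          diffQuot (b i) t (fun y => fderiv ℝ Φ y (b k)) x‖]
      · have e := integral_add (i1.const_mul 2) (i2.const_mul 2)
        simp only [Pi.add_apply] at e ⊢
        rw [e, integral_const_mul, integral_const_mul]
        linarith)
    (fun D Ψ hΨ hΨc => hΦ.tendsto_integral_inner_diffQuot_fderiv_sub μ hΨ hΨc (b i) (b k))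
    (Ψ := fun x => ψ x • fderiv ℝ Φ x (b j)) (hψm.smul hFm)
    (fun x => by
      rw [norm_smul]
      exact mul_le_mul (hψM x) (hΦ.norm_fderiv_apply_le _ _) (norm_nonneg _) hM0)
    (fun x hx => by rw [hψ0 x hx, zero_smul])
  refine h.congr fun t => ?_
  have hint : ∀ u v, Integrable (fun x => ψ x * ⟪diffQuot u t (fun y => fderiv ℝ Φ y v) x,
      fderiv ℝ Φ x (b j)⟫) μ := by
    intro u v
    simp_rw [← real_inner_smul_right]
    refine integrable_inner_of_bounded (hm u v t) (hψm.smul hFm) (hb u v t)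
      (N := M * (C * ‖b j‖)) (fun x => ?_) (isCompact_closedBall x₀ s) fun x hx => by
        rw [hψ0 x hx, zero_smul]
    rw [norm_smul]
    exact mul_le_mul (hψM x) (hΦ.norm_fderiv_apply_le _ _) (norm_nonneg _) hM0
  rw [← integral_sub (hint _ _) (hint _ _)]
  simp_rw [inner_sub_left, real_inner_smul_right]

include hGL hG

theorem LipschitzWith.tendsto_integral_mul_inner_diffQuot_add (k i j : ι) :
    Tendsto (fun t => ∫ x, ψ x * ⟪diffQuot (b k) t (fun y => fderiv ℝ Φ y (b i)) x,
        fderiv ℝ Φ x (b j)⟫ ∂μ + ∫ x, ψ x * ⟪diffQuot (b k) t (fun y => fderiv ℝ Φ y (b j)) x,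
        fderiv ℝ Φ x (b i)⟫ ∂μ) (𝓝[≠] 0) (𝓝 (∫ x, ψ x * fderiv ℝ (G i j) x (b k) ∂μ)) := by
  have hm : ∀ u v t, AEStronglyMeasurable (diffQuot u t (fun y => fderiv ℝ Φ y v)) μ :=
    fun u v t => aestronglyMeasurable_diffQuot (aestronglyMeasurable_fderiv_apply Φ v) u t
  have hb : ∀ u v t x, ‖diffQuot u t (fun y => fderiv ℝ Φ y v) x‖ ≤ _ := fun u v t =>
    norm_diffQuot_le_of_bounded (hΦ.norm_fderiv_apply_le · v) u t
  have hB : IsCompact (Metric.closedBall x₀ r) := isCompact_closedBall _ _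
  have hsB : Metric.closedBall x₀ s ⊆ Metric.closedBall x₀ r :=
    Metric.closedBall_subset_closedBall hsr.le
  have hM0 : 0 ≤ M := (abs_nonneg _).trans (hψM 0)
  have hψi : Integrable ψ μ :=
    integrable_of_bounded_of_support_subset μ hψm hψM (isCompact_closedBall x₀ s) hψ0
  obtain ⟨D, hD⟩ := hGL i j
  have h1 := hD.tendsto_integral_bilin_diffQuot μ (ContinuousLinearMap.mul ℝ ℝ) hψi (b k)
  simp only [ContinuousLinearMap.mul_apply', mul_comm _ (ψ _)] at h1
  have hint : ∀ u v w t, Integrable (fun x => ψ x * ⟪diffQuot u t (fun y => fderiv ℝ Φ y v) x,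
      fderiv ℝ Φ x w⟫) μ := by
    intro u v w t
    simp_rw [← real_inner_smul_right]
    refine integrable_inner_of_bounded (hm u v t)
      (hψm.smul (aestronglyMeasurable_fderiv_apply (μ := μ) Φ w)) (hb u v t)
      (N := M * (C * ‖w‖)) (fun x => ?_) (isCompact_closedBall x₀ s) fun x hx => by
        rw [hψ0 x hx, zero_smul]
    rw [norm_smul]
    exact mul_le_mul (hψM x) (hΦ.norm_fderiv_apply_le _ _) (norm_nonneg _) hM0
  have hint2 : ∀ t, Integrable (fun x => ψ x *
      ⟪diffQuot (b k) t (fun y => fderiv ℝ Φ y (b i)) x,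
        diffQuot (b k) t (fun y => fderiv ℝ Φ y (b j)) x⟫) μ := by
    intro t
    simp_rw [← real_inner_smul_right]
    refine integrable_inner_of_bounded (hm _ _ t) (hψm.smul (hm _ _ t)) (hb _ _ t)
      (N := M * (|t⁻¹| * (C * ‖b j‖ + C * ‖b j‖))) (fun x => ?_) (isCompact_closedBall x₀ s)
      fun x hx => by rw [hψ0 x hx, zero_smul]
    rw [norm_smul]
    exact mul_le_mul (hψM x) (hb _ _ _ _) (norm_nonneg _) hM0
  have hrem : Tendsto (fun t => t * ∫ x, ψ x *
      ⟪diffQuot (b k) t (fun y => fderiv ℝ Φ y (b i)) x,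
        diffQuot (b k) t (fun y => fderiv ℝ Φ y (b j)) x⟫ ∂μ) (𝓝[≠] 0) (𝓝 0) := by
    have ht : Tendsto (fun t : ℝ => |t| * (M * (K * ‖b k‖ ^ 2))) (𝓝[≠] 0) (𝓝 0) := by
      have : Tendsto (fun t : ℝ => |t| * (M * (K * ‖b k‖ ^ 2))) (𝓝 0)
          (𝓝 (|0| * (M * (K * ‖b k‖ ^ 2)))) :=
        (continuous_abs.mul continuous_const).tendsto 0
      rw [abs_zero, zero_mul] at this
      exact this.mono_left nhdsWithin_le_nhds
    refine squeeze_zero_norm' ?_ ht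
    filter_upwards [hΦ.eventually_setIntegral_norm_sq_diffQuot_fderiv_le μ hr hK k i,
        hΦ.eventually_setIntegral_norm_sq_diffQuot_fderiv_le μ hr hK k j] with t h1 h2
    rw [norm_mul, Real.norm_eq_abs t]
    refine mul_le_mul_of_nonneg_left ?_ (abs_nonneg _)
    have i1 := integrableOn_norm_sq_of_bounded μ (hm (b k) (b i) t) (hb _ _ t) hB
    have i2 := integrableOn_norm_sq_of_bounded μ (hm (b k) (b j) t) (hb _ _ t) hB
    rw [← setIntegral_eq_integral_of_forall_compl_eq_zero (s := Metric.closedBall x₀ r)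
      fun x hx => by rw [hψ0 x fun h => hx (hsB h), zero_mul]]
    refine (norm_integral_le_of_norm_le ((i1.const_mul (M / 2)).add (i2.const_mul (M / 2)))
      (.of_forall fun x => ?_)).trans ?_
    · rw [norm_mul]
      refine (mul_le_mul (hψM x) (norm_inner_le_norm _ _) (norm_nonneg _) hM0).trans ?_
      simp only [Pi.add_apply]
      nlinarith [mul_nonneg hM0 (sq_nonneg
        (‖diffQuot (b k) t (fun y => fderiv ℝ Φ y (b i)) x‖ -
        ‖diffQuot (b k) t (fun y => fderiv ℝ Φ y (b j)) x‖))]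
    · have e := integral_add (i1.const_mul (M / 2)) (i2.const_mul (M / 2))
      simp only [Pi.add_apply] at e ⊢
      rw [e, integral_const_mul, integral_const_mul]
      nlinarith
  have h2 := h1.sub hrem
  rw [sub_zero] at h2
  refine h2.congr' ?_
  have hlim : ∀ᶠ t in 𝓝[≠] (0 : ℝ), ‖t • b k‖ < r := by
    have : Tendsto (fun t : ℝ => ‖t • b k‖) (𝓝 0) (𝓝 ‖(0 : ℝ) • b k‖) :=
      ((continuous_id.smul continuous_const).norm).tendsto 0
    rw [zero_smul, norm_zero] at this
    exact (this.eventually (gt_mem_nhds hr)).filter_mono nhdsWithin_le_nhds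
  filter_upwards [hlim, self_mem_nhdsWithin] with t ht ht0
  have ht0 : t ≠ 0 := ht0
  have hq : Measure.QuasiMeasurePreserving (fun x : V => x + t • b k) μ μ :=
    (measurePreserving_add_right μ _).quasiMeasurePreserving
  rw [sub_eq_iff_eq_add, ← integral_const_mul, ← integral_add (hint _ _ _ t) (hint _ _ _ t)]
  have e := integral_add ((hint (b k) (b i) (b j) t).add (hint (b k) (b j) (b i) t))
    ((hint2 t).const_mul t)
  simp only [Pi.add_apply] at e
  rw [← e]
  refine integral_congr_ae ?_
  filter_upwards [hG, hq.ae hG] with x hx hx'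
  by_cases hxs : x ∈ Metric.closedBall x₀ s
  · have hxr := Metric.mem_closedBall.1 (hsB hxs)
    have hx3 : x ∈ Metric.ball x₀ (3 * r) := by
      rw [Metric.mem_ball]; linarith
    have hx3' : x + t • b k ∈ Metric.ball x₀ (3 * r) := by
      rw [Metric.mem_ball]
      have h1 : dist (x + t • b k) x = ‖t • b k‖ := by simp [dist_eq_norm]
      have := dist_triangle (x + t • b k) x x₀
      linarith
    have hdq : diffQuot (b k) t (G i j) x =
        ⟪diffQuot (b k) t (fun y => fderiv ℝ Φ y (b i)) x, fderiv ℝ Φ x (b j)⟫ +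
        ⟪diffQuot (b k) t (fun y => fderiv ℝ Φ y (b j)) x, fderiv ℝ Φ x (b i)⟫ +
        t * ⟪diffQuot (b k) t (fun y => fderiv ℝ Φ y (b i)) x,
          diffQuot (b k) t (fun y => fderiv ℝ Φ y (b j)) x⟫ := by
      rw [real_inner_comm (fderiv ℝ Φ x (b i))]
      simp only [diffQuot, ← hx hx3, ← hx' hx3', inner_sub_left, inner_sub_right,
        real_inner_smul_left, real_inner_smul_right, smul_eq_mul]
      field_simp
      ring
    rw [hdq]
    ring
  · simp [hψ0 x hxs]

/-- Koszul formula: weak convergence of the tangential components of difference quotients of the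
differential of a Lipschitz isometry. -/
theorem LipschitzWith.tendsto_integral_mul_inner_diffQuot_fderiv (k i j : ι) :
    Tendsto (fun t => ∫ x, ψ x * ⟪diffQuot (b k) t (fun y => fderiv ℝ Φ y (b i)) x,
        fderiv ℝ Φ x (b j)⟫ ∂μ) (𝓝[≠] 0) (𝓝 (∫ x, ψ x * christoffel G b k i j x ∂μ)) := by
  have A := hΦ.tendsto_integral_mul_inner_diffQuot_add μ hr hsr hK hGL hG hψm hψM hψ0
  have S := hΦ.tendsto_integral_mul_inner_diffQuot_comm μ hr hsr hK hψm hψM hψ0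
  have hψi : Integrable ψ μ :=
    integrable_of_bounded_of_support_subset μ hψm hψM (isCompact_closedBall x₀ s) hψ0
  have hI : ∀ k i j, Integrable (fun x => ψ x * fderiv ℝ (G i j) x (b k)) μ := by
    intro k i j
    obtain ⟨D, hD⟩ := hGL i j
    exact hψi.mul_bdd (c := (D : ℝ) * ‖b k‖) (aestronglyMeasurable_fderiv_apply (G i j) (b k))
      (.of_forall (hD.norm_fderiv_apply_le · (b k)))
  have h := (((((A k i j).add (A i k j)).sub (A j k i)).add (S k i j)).add (S j k i)).add (S j i k)
  have h := h.const_mul (1 / 2)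
  convert h using 1
  · funext t
    ring
  · have e : ∀ x, ψ x * christoffel G b k i j x = 1 / 2 * (ψ x * fderiv ℝ (G i j) x (b k) +
        ψ x * fderiv ℝ (G k j) x (b i) - ψ x * fderiv ℝ (G k i) x (b j)) := fun x => by
      rw [christoffel]; ring
    simp_rw [e]
    have e2 := integral_sub ((hI k i j).add (hI i k j)) (hI j k i)
    simp only [Pi.add_apply] at e2
    rw [integral_const_mul, e2, integral_add (hI k i j) (hI i k j)]
    simp

end Koszul

section GaussEquation

variable {V : Type*} [NormedAddCommGroup V] [NormedSpace ℝ V]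
  [FiniteDimensional ℝ V] [MeasurableSpace V] [BorelSpace V]
  (μ : Measure V) [μ.IsAddHaarMeasure]
  {W : Type*} [NormedAddCommGroup W] [InnerProductSpace ℝ W] [FiniteDimensional ℝ W]
  {ι : Type*} [Fintype ι]

/-- The weak form of the Gauss equation `∂ₖ∂ᵢΦ = ∑ Γₖᵢˡ ∂ₗΦ` for Lipschitz isometries. -/
theorem LipschitzWith.integral_fderiv_smul_fderiv_eq {b : ι → V} {C : ℝ≥0} {Φ : V → W}
    (hΦ : LipschitzWith C Φ) {x₀ : V} {r s K : ℝ} (hr : 0 < r) (hsr : s < r)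
    (hK : ∀ h : V, ‖h‖ < r → ∫ x in Metric.closedBall x₀ r,
      ∑ i, ‖fderiv ℝ Φ (x + h) (b i) - fderiv ℝ Φ x (b i)‖ ^ 2 ∂μ ≤ K * ‖h‖ ^ 2)
    {G Q : ι → ι → V → ℝ} (hGL : ∀ i j, ∃ D : ℝ≥0, LipschitzWith D (G i j))
    (hG : ∀ᵐ x ∂μ, x ∈ Metric.ball x₀ (3 * r) → ∀ i j,
      ⟪fderiv ℝ Φ x (b i), fderiv ℝ Φ x (b j)⟫ = G i j x)
    (hQc : ∀ i j, Continuous (Q i j)) {N : ℝ} (hQN : ∀ i j x, |Q i j x| ≤ N)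
    (hQ : ∀ᵐ x ∂μ, x ∈ Metric.ball x₀ (3 * r) → ∀ z,
      z = ∑ j, ∑ l, (Q j l x * ⟪fderiv ℝ Φ x (b j), z⟫) • fderiv ℝ Φ x (b l))
    {D : ℝ≥0} {ψ : V → ℝ} (hψ : LipschitzWith D ψ)
    (hψ0 : ∀ x ∉ Metric.closedBall x₀ s, ψ x = 0) (k i : ι) :
    ∫ x, fderiv ℝ ψ x (b k) • fderiv ℝ Φ x (b i) ∂μ = -∫ x, ψ x •
      ∑ j, ∑ l, (Q j l x * christoffel G b k i j x) • fderiv ℝ Φ x (b l) ∂μ := by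
  have hB : IsCompact (Metric.closedBall x₀ s) := isCompact_closedBall _ _
  have hψc : HasCompactSupport ψ := HasCompactSupport.intro hB hψ0
  obtain ⟨M, hM⟩ := hψ.continuous.bounded_above_of_compact_support hψc
  have hM0 : 0 ≤ M := (norm_nonneg _).trans (hM 0)
  have hΓm : ∀ j, AEStronglyMeasurable (christoffel G b k i j) μ := fun j =>
    (((aestronglyMeasurable_fderiv_apply _ _).add (aestronglyMeasurable_fderiv_apply _ _)).sub
      (aestronglyMeasurable_fderiv_apply _ _)).div₀ aestronglyMeasurable_const
  have hΓb : ∀ j, ∃ P : ℝ, ∀ x, |christoffel G b k i j x| ≤ P := by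
    intro j
    obtain ⟨D₁, h1⟩ := hGL i j
    obtain ⟨D₂, h2⟩ := hGL k j
    obtain ⟨D₃, h3⟩ := hGL k i
    refine ⟨D₁ * ‖b k‖ + D₂ * ‖b i‖ + D₃ * ‖b j‖, fun x => ?_⟩
    have e1 := abs_le.1 (h1.norm_fderiv_apply_le x (b k))
    have e2 := abs_le.1 (h2.norm_fderiv_apply_le x (b i))
    have e3 := abs_le.1 (h3.norm_fderiv_apply_le x (b j))
    rw [christoffel, abs_le]
    constructor <;> linarith
  choose P hP using hΓb
  have hFm := fun l => aestronglyMeasurable_fderiv_apply (μ := μ) Φ (b l)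
  have hi1 : Integrable (fun x => fderiv ℝ ψ x (b k) • fderiv ℝ Φ x (b i)) μ := by
    refine integrable_of_bounded_of_support_subset μ
      ((aestronglyMeasurable_fderiv_apply ψ (b k)).smul (hFm i))
      (M := (D * ‖b k‖) * (C * ‖b i‖)) (fun x => ?_) hψc fun x hx => ?_
    · rw [norm_smul]
      exact mul_le_mul (hψ.norm_fderiv_apply_le _ _) (hΦ.norm_fderiv_apply_le _ _)
        (norm_nonneg _) (by positivity)
    · rw [Function.notMem_support.1 fun h => hx (support_fderiv_subset ℝ h)]
      simp
  have hi2 : ∀ j l, Integrable (fun x => ψ x • (Q j l x * christoffel G b k i j x) •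
      fderiv ℝ Φ x (b l)) μ := by
    intro j l
    refine integrable_of_bounded_of_support_subset μ
      (hψ.continuous.aestronglyMeasurable.smul
        (((hQc j l).aestronglyMeasurable.mul (hΓm j)).smul (hFm l)))
      (M := M * ((N * P j) * (C * ‖b l‖))) (fun x => ?_) hB fun x hx => by rw [hψ0 x hx, zero_smul]
    rw [norm_smul, norm_smul, norm_mul]
    have hN0 : 0 ≤ N := (abs_nonneg _).trans (hQN j l 0)
    have hP0 : 0 ≤ P j := (abs_nonneg _).trans (hP j 0)
    gcongr
    · exact hM x
    · exact hQN j l x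
    · exact hP j x
    · exact hΦ.norm_fderiv_apply_le _ _
  have hi2' : Integrable (fun x => ψ x • ∑ j, ∑ l, (Q j l x * christoffel G b k i j x) •
      fderiv ℝ Φ x (b l)) μ := by
    simp_rw [Finset.smul_sum]
    exact integrable_finsetSum _ fun j _ => integrable_finsetSum _ fun l _ => hi2 j l
  refine ext_inner_left ℝ fun w => ?_
  rw [inner_neg_right, ← integral_inner hi1, ← integral_inner hi2']
  set θ : ι → ι → V → ℝ := fun j l x => ψ x * (Q j l x * ⟪fderiv ℝ Φ x (b l), w⟫)
  have hlim : ∀ j l, Tendsto (fun t => ∫ x, θ j l x *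
      ⟪diffQuot (b k) t (fun y => fderiv ℝ Φ y (b i)) x, fderiv ℝ Φ x (b j)⟫ ∂μ) (𝓝[≠] 0)
      (𝓝 (∫ x, θ j l x * christoffel G b k i j x ∂μ)) ∧
      (AEStronglyMeasurable (θ j l) μ ∧ ∀ x, |θ j l x| ≤ M * (N * ((C * ‖b l‖) * ‖w‖))) := by
    intro j l
    have hθm : AEStronglyMeasurable (θ j l) μ :=
      hψ.continuous.aestronglyMeasurable.mul
        ((hQc j l).aestronglyMeasurable.mul ((hFm l).inner aestronglyMeasurable_const))
    have hθb : ∀ x, |θ j l x| ≤ M * (N * ((C * ‖b l‖) * ‖w‖)) := by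
      intro x
      have hN0 : 0 ≤ N := (abs_nonneg _).trans (hQN j l 0)
      rw [abs_mul, abs_mul]
      refine mul_le_mul (hM x) (mul_le_mul (hQN j l x) ((abs_real_inner_le_norm _ _).trans ?_)
        (abs_nonneg _) hN0) (by positivity) hM0
      exact mul_le_mul_of_nonneg_right (hΦ.norm_fderiv_apply_le _ _) (norm_nonneg _)
    exact ⟨hΦ.tendsto_integral_mul_inner_diffQuot_fderiv μ hr hsr hK hGL hG hθm hθb
      (fun x hx => by simp only [θ, hψ0 x hx, zero_mul]) k i j, hθm, hθb⟩
  have hm : ∀ t, AEStronglyMeasurable (diffQuot (b k) t (fun y => fderiv ℝ Φ y (b i))) μ :=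
    fun t => aestronglyMeasurable_diffQuot (hFm i) (b k) t
  have hb : ∀ t x, ‖diffQuot (b k) t (fun y => fderiv ℝ Φ y (b i)) x‖ ≤ _ := fun t =>
    norm_diffQuot_le_of_bounded (hΦ.norm_fderiv_apply_le · (b i)) (b k) t
  have h1 := tendsto_finsetSum Finset.univ fun j (_ : j ∈ Finset.univ) =>
    tendsto_finsetSum Finset.univ fun l (_ : l ∈ Finset.univ) => (hlim j l).1
  obtain ⟨E, hE⟩ := hψ.smul_of_bounded (LipschitzWith.const (α := V) w) hM fun _ => le_rfl
  have hEc : HasCompactSupport fun x => ψ x • w := hψc.smul_right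
  have h2 := tendsto_integral_inner_diffQuot μ (hFm i) (hΦ.norm_fderiv_apply_le · (b i)) hE hEc
    (b k)
  have heq : ∀ t, ∑ j, ∑ l, ∫ x, θ j l x *
      ⟪diffQuot (b k) t (fun y => fderiv ℝ Φ y (b i)) x, fderiv ℝ Φ x (b j)⟫ ∂μ =
      ∫ x, ⟪diffQuot (b k) t (fun y => fderiv ℝ Φ y (b i)) x, ψ x • w⟫ ∂μ := by
    intro t
    have hi : ∀ j l, Integrable (fun x => θ j l x *
        ⟪diffQuot (b k) t (fun y => fderiv ℝ Φ y (b i)) x, fderiv ℝ Φ x (b j)⟫) μ := by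
      intro j l
      simp_rw [← real_inner_smul_right]
      refine integrable_inner_of_bounded (hm t) ((hlim j l).2.1.smul (hFm j)) (hb t)
        (N := (M * (N * ((C * ‖b l‖) * ‖w‖))) * (C * ‖b j‖)) (fun x => ?_) hB fun x hx => by
          simp only [θ, hψ0 x hx, zero_mul, zero_smul]
      rw [norm_smul]
      exact mul_le_mul ((hlim j l).2.2 x) (hΦ.norm_fderiv_apply_le _ _) (norm_nonneg _)
        ((abs_nonneg _).trans ((hlim j l).2.2 x))
    simp_rw [← integral_finsetSum _ fun l _ => hi _ l]
    rw [← integral_finsetSum _ fun j _ => integrable_finsetSum _ fun l _ => hi j l]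
    refine integral_congr_ae ?_
    filter_upwards [hQ] with x hx
    by_cases hxs : x ∈ Metric.closedBall x₀ s
    · have hx3 : x ∈ Metric.ball x₀ (3 * r) := by
        have := Metric.mem_closedBall.1 hxs
        rw [Metric.mem_ball]; linarith
      conv_rhs => rw [hx hx3 (diffQuot (b k) t (fun y => fderiv ℝ Φ y (b i)) x)]
      simp only [sum_inner, real_inner_smul_left, real_inner_smul_right]
      refine Finset.sum_congr rfl fun j _ => Finset.sum_congr rfl fun l _ => ?_
      rw [real_inner_comm (diffQuot _ _ _ _) (fderiv ℝ Φ x (b j))]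
      simp only [θ]
      ring
    · simp [θ, hψ0 x hxs]
  have h3 := tendsto_nhds_unique (h1.congr heq) h2
  have e1 : ∫ x, ⟪w, fderiv ℝ ψ x (b k) • fderiv ℝ Φ x (b i)⟫ ∂μ =
      ∫ x, ⟪fderiv ℝ Φ x (b i), fderiv ℝ (fun x => ψ x • w) x (b k)⟫ ∂μ := by
    refine integral_congr_ae ?_
    filter_upwards [hψ.ae_differentiableAt (μ := μ)] with x hx
    rw [fderiv_smul_const hx, real_inner_comm, real_inner_smul_left]
    simp [real_inner_smul_right]
  have e2 : ∫ x, ⟪w, ψ x • ∑ j, ∑ l, (Q j l x * christoffel G b k i j x) •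
      fderiv ℝ Φ x (b l)⟫ ∂μ = ∑ j, ∑ l, ∫ x, θ j l x * christoffel G b k i j x ∂μ := by
    have hi : ∀ j l, Integrable (fun x => θ j l x * christoffel G b k i j x) μ := by
      intro j l
      refine integrable_of_bounded_of_support_subset μ ((hlim j l).2.1.mul (hΓm j))
        (M := (M * (N * ((C * ‖b l‖) * ‖w‖))) * P j) (fun x => ?_) hB
        fun x hx => by simp only [θ, hψ0 x hx, zero_mul]
      rw [norm_mul]
      exact mul_le_mul ((hlim j l).2.2 x) (hP j x) (norm_nonneg _)
        ((abs_nonneg _).trans ((hlim j l).2.2 x))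
    simp_rw [← integral_finsetSum _ fun l _ => hi _ l]
    rw [← integral_finsetSum _ fun j _ => integrable_finsetSum _ fun l _ => hi j l]
    refine integral_congr_ae (.of_forall fun x => ?_)
    simp only [real_inner_smul_right, inner_sum, Finset.mul_sum]
    refine Finset.sum_congr rfl fun j _ => Finset.sum_congr rfl fun l _ => ?_
    simp only [θ]
    rw [real_inner_comm]
    ring
  rw [e1, e2, h3, neg_neg]

end GaussEquation

section WeakDerivative

variable {V : Type*} [NormedAddCommGroup V] [NormedSpace ℝ V]
  [FiniteDimensional ℝ V] [MeasurableSpace V] [BorelSpace V]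
variable {A : Type*} [NormedAddCommGroup A] [NormedSpace ℝ A] [FiniteDimensional ℝ A]
variable (μ : Measure V) [μ.IsAddHaarMeasure]

/-- `P` is a weak derivative of `u` in the direction `v` on the closed ball of centre `x₀` and
radius `s`, tested against Lipschitz functions vanishing outside this ball. -/
def HasWeakDerivOn (x₀ : V) (s : ℝ) (u P : V → A) (v : V) : Prop :=
  ∀ (C : ℝ≥0) (ψ : V → ℝ), LipschitzWith C ψ → (∀ x, x ∉ Metric.closedBall x₀ s → ψ x = 0) →
    ∫ x, fderiv ℝ ψ x v • u x ∂μ = -∫ x, ψ x • P x ∂μ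

variable {μ} {x₀ : V} {s : ℝ} {u P : V → A} {v : V}

theorem HasWeakDerivOn.mono {s' : ℝ} (h : HasWeakDerivOn μ x₀ s u P v) (hs : s' ≤ s) :
    HasWeakDerivOn μ x₀ s' u P v := fun C ψ hψ h0 =>
  h C ψ hψ fun x hx => h0 x fun hx' => hx (Metric.closedBall_subset_closedBall hs hx')

theorem HasWeakDerivOn.congr {u' P' : V → A} (h : HasWeakDerivOn μ x₀ s u P v)
    (hu : ∀ᵐ x ∂μ, x ∈ Metric.closedBall x₀ s → u x = u' x)
    (hP : ∀ᵐ x ∂μ, x ∈ Metric.closedBall x₀ s → P x = P' x) :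
    HasWeakDerivOn μ x₀ s u' P' v := by
  intro C ψ hψ h0
  have e1 : ∫ x, fderiv ℝ ψ x v • u' x ∂μ = ∫ x, fderiv ℝ ψ x v • u x ∂μ := by
    refine integral_congr_ae ?_
    filter_upwards [hu] with x hx
    by_cases hxs : x ∈ Metric.closedBall x₀ s
    · rw [hx hxs]
    · have : ψ =ᶠ[𝓝 x] fun _ => 0 := by
        filter_upwards [Metric.isClosed_closedBall.isOpen_compl.mem_nhds hxs] with y hy
        exact h0 y hy
      simp [this.fderiv_eq]
  have e2 : ∫ x, ψ x • P' x ∂μ = ∫ x, ψ x • P x ∂μ := by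
    refine integral_congr_ae ?_
    filter_upwards [hP] with x hx
    by_cases hxs : x ∈ Metric.closedBall x₀ s
    · rw [hx hxs]
    · simp [h0 x hxs]
  rw [e1, e2]
  exact h C ψ hψ h0

theorem HasWeakDerivOn.fderiv_convolution (h : HasWeakDerivOn μ x₀ s u P v)
    (hu : LocallyIntegrable u μ) (φ : ContDiffBump (0 : V)) {x : V}
    (hx : dist x x₀ + φ.rOut ≤ s) :
    fderiv ℝ (φ.normed μ ⋆[ContinuousLinearMap.lsmul ℝ ℝ, μ] u) x v =
      (φ.normed μ ⋆[ContinuousLinearMap.lsmul ℝ ℝ, μ] P) x := by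
  have hc : HasCompactSupport (φ.normed μ) := φ.hasCompactSupport_normed
  have hd : ContDiff ℝ 1 (φ.normed μ) := φ.contDiff_normed
  have h1 := (hc.hasFDerivAt_convolution_left (ContinuousLinearMap.lsmul ℝ ℝ) hd hu x)
  rw [h1.fderiv, convolution_def, ContinuousLinearMap.integral_apply]
  swap
  · exact (hc.fderiv ℝ).convolutionExists_left _ (hd.continuous_fderiv one_ne_zero) hu x
  obtain ⟨C, hC⟩ : ∃ C, LipschitzWith C (φ.normed μ) :=
    hd.lipschitzWith_of_hasCompactSupport hc one_ne_zero
  have hψ : LipschitzWith C fun t => φ.normed μ (x - t) := by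
    refine LipschitzWith.of_dist_le_mul fun a b => (hC.dist_le_mul _ _).trans_eq ?_
    rw [dist_sub_left]
  have key := h C _ hψ fun t ht => by
    have ht' : x - t ∉ Function.support (φ.normed μ) := by
      rw [φ.support_normed_eq]
      intro hm
      refine ht ?_
      rw [mem_ball_zero_iff] at hm
      have := dist_triangle t x x₀
      rw [Metric.mem_closedBall]
      rw [← dist_eq_norm, dist_comm] at hm
      linarith
    simpa using ht'
  have hfd : ∀ t, fderiv ℝ (fun t => φ.normed μ (x - t)) t v = - fderiv ℝ (φ.normed μ) (x - t) v := by
    intro t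
    have h2 := ((hd.differentiable one_ne_zero (x - t)).hasFDerivAt).comp t
      ((hasFDerivAt_id t).const_sub x)
    have h3 : HasFDerivAt (fun t => φ.normed μ (x - t)) _ t := h2
    rw [h3.fderiv]
    simp
  simp only [hfd, neg_smul, integral_neg, neg_inj] at key
  rw [convolution_eq_swap]
  simp only [ContinuousLinearMap.lsmul_apply]
  rw [← key, ← integral_sub_left_eq_self _ μ x]
  simp [ContinuousLinearMap.precompL_apply]

theorem differentiable_normed_convolution (φ : ContDiffBump (0 : V)) (hu : LocallyIntegrable u μ) :
    Differentiable ℝ (φ.normed μ ⋆[ContinuousLinearMap.lsmul ℝ ℝ, μ] u) := fun x =>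
  (φ.hasCompactSupport_normed.hasFDerivAt_convolution_left (ContinuousLinearMap.lsmul ℝ ℝ)
    φ.contDiff_normed hu x).differentiableAt

variable {ι : Type*} [Fintype ι]

theorem HasWeakDerivOn.exists_lipschitz_ae_eq (b : Module.Basis ι ℝ V) {R : ι → V → A}
    (hu : LocallyIntegrable u μ) (h : ∀ k, HasWeakDerivOn μ x₀ s u (R k) (b k)) {M : ℝ}
    (hM : ∀ k x, ‖R k x‖ ≤ M) {s' : ℝ} (hs : s' < s) :
    ∃ (C : ℝ≥0) (H : V → A), LipschitzWith C H ∧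
      ∀ᵐ x ∂μ, x ∈ Metric.closedBall x₀ s' → u x = H x := by
  obtain ⟨φ, hφ0, hφ2, -⟩ := exists_contDiffBump_seq V
  obtain ⟨B, hB0, hB⟩ := b.exists_opNorm_le (F := A)
  set D : ℝ≥0 := ⟨B * max M 0, by positivity⟩ with hD
  set w : ℕ → V → A := fun n => (φ n).normed μ ⋆[ContinuousLinearMap.lsmul ℝ ℝ, μ] u with hw
  have hlip : ∀ᶠ n in atTop, LipschitzOnWith D (w n) (Metric.closedBall x₀ s') := by
    filter_upwards [hφ0.eventually (gt_mem_nhds (sub_pos.2 hs))] with n hn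
    refine (convex_closedBall x₀ s').lipschitzOnWith_of_nnnorm_fderiv_le
      (fun x _ => differentiable_normed_convolution (φ n) hu x) fun x hx => ?_
    rw [← NNReal.coe_le_coe, coe_nnnorm]
    refine hB (le_max_right _ _) fun k => ?_
    rw [(h k).fderiv_convolution hu (φ n) (by rw [Metric.mem_closedBall] at hx; linarith)]
    exact (φ n).norm_convolution_le fun y _ => (hM k y).trans (le_max_left _ _)
  have hae := ContDiffBump.ae_convolution_tendsto_right_of_locallyIntegrable (μ := μ) hφ0
    (.of_forall hφ2) hu
  set T : Set V := {x | Tendsto (fun n => w n x) atTop (𝓝 (u x))} ∩ Metric.closedBall x₀ s' with hT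
  have hTL : LipschitzOnWith D u T := by
    refine LipschitzOnWith.of_dist_le_mul fun x hx y hy => ?_
    refine le_of_tendsto (hx.1.dist hy.1) ?_
    filter_upwards [hlip] with n hn
    exact hn.dist_le_mul x hx.2 y hy.2
  obtain ⟨H, hH, hHT⟩ := hTL.extend_finite_dimension
  refine ⟨_, H, hH, ?_⟩
  filter_upwards [hae] with x hx hxs
  exact hHT ⟨hx, hxs⟩

theorem HasWeakDerivOn.hasFDerivAt (b : Module.Basis ι ℝ V) {R : ι → V → A}
    (hu : Continuous u) (hR : ∀ k, Continuous (R k))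
    (h : ∀ k, HasWeakDerivOn μ x₀ s u (R k) (b k)) {x : V} (hx : x ∈ Metric.ball x₀ s) :
    HasFDerivAt u (∑ k, (LinearMap.toContinuousLinearMap (b.coord k)).smulRight (R k x)) x := by
  obtain ⟨φ, hφ0, hφ2, -⟩ := exists_contDiffBump_seq V
  obtain ⟨B, hB0, hB⟩ := b.exists_opNorm_le (F := A)
  set w : ℕ → V → A := fun n => (φ n).normed μ ⋆[ContinuousLinearMap.lsmul ℝ ℝ, μ] u with hw
  refine hasFDerivAt_of_tendstoLocallyUniformlyOn (f := w) (f' := fun n y => fderiv ℝ (w n) y)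
    (g' := fun x => ∑ k, (LinearMap.toContinuousLinearMap (b.coord k)).smulRight (R k x))
    (l := atTop) Metric.isOpen_ball ?_
    (fun n y _ => (differentiable_normed_convolution (φ n) hu.locallyIntegrable y).hasFDerivAt)
    (fun y _ => ?_) hx
  · rw [Metric.tendstoLocallyUniformlyOn_iff]
    intro ε hε y hy
    have hδ : ∀ᶠ δ in 𝓝[>] (0 : ℝ), (∀ k, ∀ z ∈ Metric.ball y (2 * δ),
        dist (R k z) (R k y) < ε / (4 * B)) ∧ dist y x₀ + 2 * δ < s := by
      refine (eventually_all.2 fun k => ?_).and ?_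
      · obtain ⟨δ, hδ, hδ'⟩ := Metric.continuous_iff.1 (hR k) y (ε / (4 * B)) (by positivity)
        filter_upwards [Ioo_mem_nhdsGT (half_pos hδ)] with δ' hd z hz
        exact hδ' z (by rw [Metric.mem_ball] at hz; linarith [hd.2])
      · have : 0 < (s - dist y x₀) / 2 := by
          rw [Metric.mem_ball] at hy; linarith
        filter_upwards [Ioo_mem_nhdsGT this] with δ' hd
        linarith [hd.2]
    obtain ⟨δ, ⟨h1, h2⟩, hδ0⟩ := (hδ.and self_mem_nhdsWithin).exists
    have hδ0 : 0 < δ := hδ0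
    refine ⟨Metric.ball y δ, mem_nhdsWithin_of_mem_nhds (Metric.ball_mem_nhds y hδ0), ?_⟩
    filter_upwards [hφ0.eventually (gt_mem_nhds hδ0)] with n hn z hz
    rw [dist_comm, dist_eq_norm]
    refine (hB (M := ε / (2 * B)) (by positivity) fun k => ?_).trans_lt (b := B * (ε / (2 * B))) ?_
    · rw [Metric.mem_ball] at hz
      have hzx := dist_triangle z y x₀
      rw [_root_.sub_apply, (h k).fderiv_convolution hu.locallyIntegrable (φ n)
        (by linarith)]
      have : (∑ k, (LinearMap.toContinuousLinearMap (b.coord k)).smulRight (R k z)) (b k)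
          = R k z := by
        classical
        simp [Finsupp.single_apply]
      rw [this, ← dist_eq_norm]
      refine (φ n).dist_normed_convolution_le (hR k).aestronglyMeasurable fun a ha => ?_
      rw [Metric.mem_ball] at ha
      have ha2 := dist_triangle a z y
      have e1 := h1 k a (by rw [Metric.mem_ball]; linarith)
      have e2 := h1 k z (by rw [Metric.mem_ball]; linarith)
      have e3 := dist_triangle_right (R k a) (R k z) (R k y)
      have : ε / (2 * B) = ε / (4 * B) + ε / (4 * B) := by field_simp; norm_num
      linarith
    · have : B * (ε / (2 * B)) = ε / 2 := by field_simp
      linarith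
  · exact ContDiffBump.convolution_tendsto_right_of_continuous hφ0 hu y

theorem contDiffOn_succ_of_hasFDerivAt_basis (b : Module.Basis ι ℝ V) {R : ι → V → A} {U : Set V}
    (hU : IsOpen U) (h : ∀ x ∈ U,
      HasFDerivAt u (∑ k, (LinearMap.toContinuousLinearMap (b.coord k)).smulRight (R k x)) x)
    {n : ℕ} (hR : ∀ k, ContDiffOn ℝ n (R k) U) : ContDiffOn ℝ (n + 1 : ℕ) u U := by
  push_cast
  rw [contDiffOn_succ_iff_fderiv_of_isOpen hU]
  refine ⟨fun x hx => (h x hx).differentiableAt.differentiableWithinAt, by simp, ?_⟩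
  refine ContDiffOn.congr ?_ fun x hx => (h x hx).fderiv
  refine ContDiffOn.sum fun k _ => ?_
  exact contDiffOn_const.smulRight (hR k)

end WeakDerivative

section Regularity

variable {V : Type*} [NormedAddCommGroup V] [NormedSpace ℝ V]
  [FiniteDimensional ℝ V] [MeasurableSpace V] [BorelSpace V]
  (μ : Measure V) [μ.IsAddHaarMeasure]
  {W : Type*} [NormedAddCommGroup W] [InnerProductSpace ℝ W] [FiniteDimensional ℝ W]
  {ι : Type*} [Fintype ι]

theorem contDiff_christoffel {G : ι → ι → V → ℝ} (hG : ∀ i j, ContDiff ℝ ∞ (G i j)) (b : ι → V)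
    (k i j : ι) : ContDiff ℝ ∞ (christoffel G b k i j) := by
  have h : ∀ i j v, ContDiff ℝ ∞ fun x => fderiv ℝ (G i j) x v := fun i j v =>
    ((hG i j).fderiv_right (m := ∞) (by simp)).clm_apply contDiff_const
  exact (((h _ _ _).add (h _ _ _)).sub (h _ _ _)).div_const 2

theorem exists_bound_and_lipschitz {κ : Type*} [Fintype κ] {a : κ → κ → V → ℝ}
    (ha : ∀ i j, ContDiff ℝ ∞ (a i j)) (hac : ∀ i j, HasCompactSupport (a i j)) :
    ∃ A : ℝ, (∀ i j x, |a i j x| ≤ A) ∧ ∀ i j x y, |a i j x - a i j y| ≤ A * ‖x - y‖ := by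
  choose B hB using fun i j => (ha i j).continuous.bounded_above_of_compact_support (hac i j)
  choose D hD using fun i j =>
    (ha i j).lipschitzWith_of_hasCompactSupport (hac i j) (by simp)
  have hB0 : ∀ i j, 0 ≤ B i j := fun i j => (norm_nonneg _).trans (hB i j 0)
  have hle : ∀ i j, B i j + D i j ≤ ∑ i, ∑ j, (B i j + D i j) := fun i j =>
    (Finset.single_le_sum (f := fun j => B i j + D i j)
      (fun j _ => add_nonneg (hB0 i j) (D i j).2) (Finset.mem_univ j)).trans
    (Finset.single_le_sum (f := fun i => ∑ j, (B i j + D i j))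
      (fun i _ => Finset.sum_nonneg fun j _ => add_nonneg (hB0 i j) (D i j).2)
      (Finset.mem_univ i))
  refine ⟨∑ i, ∑ j, (B i j + D i j), fun i j x => ?_, fun i j x y => ?_⟩
  · exact (hB i j x).trans (le_trans (by linarith [(D i j).2]) (hle i j))
  · refine ((hD i j).norm_sub_le x y).trans (mul_le_mul_of_nonneg_right ?_ (norm_nonneg _))
    exact le_trans (by linarith [hB0 i j]) (hle i j)

/-- A Lipschitz map whose first fundamental form is smooth and whose cofactors are linear in its
differential with smooth elliptic coefficients is smooth. -/
theorem LipschitzWith.contDiffAt_of_isometric [DecidableEq ι] (η : W [⋀^ι]→L[ℝ] ℝ)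
    (b : Module.Basis ι ℝ V) {C : ℝ≥0} {Φ : V → W} (hΦ : LipschitzWith C Φ)
    {a G Q : ι → ι → V → ℝ} {c r : ℝ} {x₀ : V} (hr : 0 < r) (hc : 0 < c)
    (has : ∀ i j, ContDiff ℝ ∞ (a i j)) (hac : ∀ i j, HasCompactSupport (a i j))
    (hGs : ∀ i j, ContDiff ℝ ∞ (G i j)) (hGc : ∀ i j, HasCompactSupport (G i j))
    (hQs : ∀ i j, ContDiff ℝ ∞ (Q i j)) (hQc : ∀ i j, HasCompactSupport (Q i j))
    (hell : ∀ x ∈ Metric.ball x₀ (3 * r), ∀ y : ι → ℝ,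
      c * ∑ i, y i ^ 2 ≤ ∑ i, ∑ j, a i j x * (y j * y i))
    (ha : ∀ᵐ x ∂μ, x ∈ Metric.ball x₀ (3 * r) → ∀ i w,
      η (Function.update (fun j => fderiv ℝ Φ x (b j)) i w) =
        ∑ j, a i j x * ⟪fderiv ℝ Φ x (b j), w⟫)
    (hG : ∀ᵐ x ∂μ, x ∈ Metric.ball x₀ (3 * r) → ∀ i j,
      ⟪fderiv ℝ Φ x (b i), fderiv ℝ Φ x (b j)⟫ = G i j x)
    (hQ : ∀ᵐ x ∂μ, x ∈ Metric.ball x₀ (3 * r) → ∀ z,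
      z = ∑ j, ∑ l, (Q j l x * ⟪fderiv ℝ Φ x (b j), z⟫) • fderiv ℝ Φ x (b l)) :
    ContDiffAt ℝ ∞ Φ x₀ := by
  obtain ⟨A, hA, hAL⟩ := exists_bound_and_lipschitz has hac
  obtain ⟨N, hN, -⟩ := exists_bound_and_lipschitz hQs hQc
  obtain ⟨K, -, hK⟩ := hΦ.exists_setIntegral_norm_sq_fderiv_sub_le μ η b hr hc hA hAL hell ha
  have hweak : ∀ i k, HasWeakDerivOn μ x₀ (2 * r / 3) (fun x => fderiv ℝ Φ x (b i))
      (fun x => ∑ j, ∑ l, (Q j l x * christoffel G b k i j x) • fderiv ℝ Φ x (b l)) (b k) :=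
    fun i k D ψ hψ hψ0 => hΦ.integral_fderiv_smul_fderiv_eq μ hr (by linarith) hK
      (fun i j => (hGs i j).lipschitzWith_of_hasCompactSupport (hGc i j) (by simp)) hG
      (fun i j => (hQs i j).continuous) hN hQ hψ hψ0 k i
  have hbd : ∀ i, ∃ M : ℝ, ∀ k x,
      ‖∑ j, ∑ l, (Q j l x * christoffel G b k i j x) • fderiv ℝ Φ x (b l)‖ ≤ M := by
    intro i
    have : ∀ k j l, ∃ M : ℝ, ∀ x, ‖Q j l x * christoffel G b k i j x‖ ≤ M := fun k j l =>
      Continuous.bounded_above_of_compact_support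
        ((hQs j l).continuous.mul (contDiff_christoffel hGs b k i j).continuous) (hQc j l).mul_right
    choose M hM using this
    have hM0 : ∀ k j l, 0 ≤ M k j l := fun k j l => (norm_nonneg _).trans (hM k j l 0)
    refine ⟨∑ k, ∑ j, ∑ l, M k j l * (C * ‖b l‖), fun k x => ?_⟩
    refine le_trans ?_ (Finset.single_le_sum (f := fun k => ∑ j, ∑ l, M k j l * (C * ‖b l‖))
      (fun k _ => Finset.sum_nonneg fun j _ => Finset.sum_nonneg fun l _ =>
        mul_nonneg (hM0 k j l) (by positivity)) (Finset.mem_univ k))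
    refine norm_sum_le_of_le _ fun j _ => norm_sum_le_of_le _ fun l _ => ?_
    rw [norm_smul]
    exact mul_le_mul (hM k j l x) (hΦ.norm_fderiv_apply_le x (b l)) (norm_nonneg _) (hM0 k j l)
  have hlip : ∀ i, ∃ (E : ℝ≥0) (H : V → W), LipschitzWith E H ∧
      ∀ᵐ x ∂μ, x ∈ Metric.closedBall x₀ (r / 3) → fderiv ℝ Φ x (b i) = H x := fun i =>
    HasWeakDerivOn.exists_lipschitz_ae_eq b (hΦ.locallyIntegrable_fderiv_apply (b i)) (hweak i)
      (hbd i).choose_spec (by linarith)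
  choose E H hH hHeq using hlip
  have hHall : ∀ᵐ x ∂μ, x ∈ Metric.closedBall x₀ (r / 3) → ∀ i, fderiv ℝ Φ x (b i) = H i x := by
    filter_upwards [ae_all_iff.2 hHeq] with x hx hxs i using hx i hxs
  set R : ι → ι → V → W := fun i k x =>
    ∑ j, ∑ l, (Q j l x * christoffel G b k i j x) • H l x with hR
  have hcoef : ∀ k i j l, ContDiff ℝ ∞ fun x => Q j l x * christoffel G b k i j x :=
    fun k i j l => (hQs j l).mul (contDiff_christoffel hGs b k i j)
  have hRc : ∀ i k, Continuous (R i k) := fun i k =>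
    continuous_finsetSum _ fun j _ => continuous_finsetSum _ fun l _ =>
      (hcoef k i j l).continuous.smul (hH l).continuous
  have hHd : ∀ i, ∀ x ∈ Metric.ball x₀ (r / 3), HasFDerivAt (H i)
      (∑ k, (LinearMap.toContinuousLinearMap (b.coord k)).smulRight (R i k x)) x := fun i x hx =>
    HasWeakDerivOn.hasFDerivAt (μ := μ) b (hH i).continuous (hRc i) (fun k =>
      ((hweak i k).mono (by linarith)).congr (hHeq i) (by
        filter_upwards [hHall] with y hy hys
        simp only [hR, hy hys])) hx
  have hHn : ∀ n : ℕ, ∀ i, ContDiffOn ℝ n (H i) (Metric.ball x₀ (r / 3)) := by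
    intro n
    induction n with
    | zero => exact fun i => contDiffOn_zero.2 (hH i).continuous.continuousOn
    | succ n ih =>
      refine fun i => contDiffOn_succ_of_hasFDerivAt_basis b Metric.isOpen_ball (hHd i) fun k => ?_
      exact ContDiffOn.sum fun j _ => ContDiffOn.sum fun l _ =>
        ((hcoef k i j l).contDiffOn.of_le (by exact_mod_cast le_top)).smul (ih l)
  have hΦd : ∀ x ∈ Metric.ball x₀ (r / 3), HasFDerivAt Φ
      (∑ k, (LinearMap.toContinuousLinearMap (b.coord k)).smulRight (H k x)) x := fun x hx =>
    HasWeakDerivOn.hasFDerivAt (μ := μ) b hΦ.continuous (fun k => (hH k).continuous) (fun k =>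
      HasWeakDerivOn.congr (u := Φ) (P := fun x => fderiv ℝ Φ x (b k)) (fun D ψ hψ hψ0 => by
        have hψc : HasCompactSupport ψ := HasCompactSupport.intro (isCompact_closedBall _ _) hψ0
        have := hΦ.integral_bilin_fderiv μ (ContinuousLinearMap.lsmul ℝ ℝ).flip hψ hψc (b k)
        simp only [ContinuousLinearMap.flip_apply, ContinuousLinearMap.lsmul_apply] at this
        rw [this, neg_neg]) (.of_forall fun _ _ => rfl) (hHeq k)) hx
  have hfin : ContDiffOn ℝ ∞ Φ (Metric.ball x₀ (r / 3)) := by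
    rw [contDiffOn_infty]
    intro n
    exact (contDiffOn_succ_of_hasFDerivAt_basis b Metric.isOpen_ball hΦd (hHn n)).of_le
      (by exact_mod_cast Nat.le_succ n)
  exact hfin.contDiffAt (Metric.ball_mem_nhds x₀ (by linarith))

end Regularity

section LocalRegularity

variable {V : Type*} [NormedAddCommGroup V] [NormedSpace ℝ V] [FiniteDimensional ℝ V]

theorem ContDiffBump.contDiff_mul_of_contDiffOn {x₀ : V} (ζ : ContDiffBump x₀) {U : Set V}
    (hU : IsOpen U) (hζ : Metric.closedBall x₀ ζ.rOut ⊆ U) {a : V → ℝ} (ha : ContDiffOn ℝ ∞ a U) :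
    ContDiff ℝ ∞ fun x => ζ x * a x := by
  rw [contDiff_iff_contDiffAt]
  intro x
  by_cases hx : x ∈ U
  · exact ζ.contDiffAt.mul (ha.contDiffAt (hU.mem_nhds hx))
  · have hx' : x ∈ (Metric.closedBall x₀ ζ.rOut)ᶜ := fun h => hx (hζ h)
    refine (contDiffAt_const (c := (0 : ℝ))).congr_of_eventuallyEq ?_
    filter_upwards [Metric.isClosed_closedBall.isOpen_compl.mem_nhds hx'] with y hy
    rw [ζ.zero_of_le_dist, zero_mul]
    rw [Set.mem_compl_iff, Metric.mem_closedBall, not_le] at hy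
    exact hy.le

theorem exists_elliptic_const {ι : Type*} [Fintype ι] {a : ι → ι → V → ℝ} {B : Set V}
    (hB : IsCompact B) (ha : ∀ i j, ContinuousOn (a i j) B)
    (hpos : ∀ x ∈ B, ∀ y : ι → ℝ, y ≠ 0 → 0 < ∑ i, ∑ j, a i j x * (y j * y i)) :
    ∃ c : ℝ, 0 < c ∧ ∀ x ∈ B, ∀ y : ι → ℝ, c * ∑ i, y i ^ 2 ≤ ∑ i, ∑ j, a i j x * (y j * y i) := by
  rcases (B ×ˢ Metric.sphere (0 : ι → ℝ) 1).eq_empty_or_nonempty with he | hne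
  · refine ⟨1, one_pos, fun x hx y => ?_⟩
    rcases eq_or_ne y 0 with rfl | hy
    · simp
    · exfalso
      have : (x, ‖y‖⁻¹ • y) ∈ B ×ˢ Metric.sphere (0 : ι → ℝ) 1 :=
        ⟨hx, by simp [norm_smul, hy]⟩
      rw [he] at this
      exact this
  have hcont : ContinuousOn (fun p : V × (ι → ℝ) => ∑ i, ∑ j, a i j p.1 * (p.2 j * p.2 i))
      (B ×ˢ Metric.sphere (0 : ι → ℝ) 1) := by
    refine continuousOn_finsetSum _ fun i _ => continuousOn_finsetSum _ fun j _ => ?_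
    refine ((ha i j).comp continuousOn_fst fun p hp => hp.1).mul ?_
    exact Continuous.continuousOn (by fun_prop)
  obtain ⟨p, hp, hmin⟩ := (hB.prod (isCompact_sphere _ _)).exists_isMinOn hne hcont
  set m := ∑ i, ∑ j, a i j p.1 * (p.2 j * p.2 i) with hm
  have hm0 : 0 < m := hpos _ hp.1 _ (ne_zero_of_mem_sphere one_ne_zero ⟨p.2, hp.2⟩)
  refine ⟨m / (Fintype.card ι + 1), by positivity, fun x hx y => ?_⟩
  rcases eq_or_ne y 0 with rfl | hy
  · simp
  have hn : 0 < ‖y‖ := norm_pos_iff.2 hy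
  have h1 : m ≤ ∑ i, ∑ j, a i j x * ((‖y‖⁻¹ • y) j * (‖y‖⁻¹ • y) i) :=
    hmin (a := (x, ‖y‖⁻¹ • y)) ⟨hx, by simp [norm_smul, hy]⟩
  have h2 : ∑ i, ∑ j, a i j x * (y j * y i) =
      ‖y‖ ^ 2 * ∑ i, ∑ j, a i j x * ((‖y‖⁻¹ • y) j * (‖y‖⁻¹ • y) i) := by
    simp only [Finset.mul_sum, Pi.smul_apply, smul_eq_mul]
    refine Finset.sum_congr rfl fun i _ => Finset.sum_congr rfl fun j _ => ?_
    field_simp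
  have h3 : ∑ i, y i ^ 2 ≤ Fintype.card ι * ‖y‖ ^ 2 := by
    have : ∀ i ∈ Finset.univ, y i ^ 2 ≤ ‖y‖ ^ 2 := fun i _ => by
      rw [← sq_abs]
      exact pow_le_pow_left₀ (abs_nonneg _) (norm_le_pi_norm y i) 2
    simpa using Finset.sum_le_card_nsmul _ _ _ this
  rw [h2]
  have h4 : m / (Fintype.card ι + 1) * ∑ i, y i ^ 2 ≤ m * ‖y‖ ^ 2 := by
    rw [div_mul_eq_mul_div, div_le_iff₀ (by positivity), mul_assoc]
    refine mul_le_mul_of_nonneg_left ?_ hm0.le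
    nlinarith [sq_nonneg ‖y‖]
  have h5 := mul_le_mul_of_nonneg_right h1 (sq_nonneg ‖y‖)
  linarith

variable [MeasurableSpace V] [BorelSpace V] (μ : Measure V) [μ.IsAddHaarMeasure]
  {W : Type*} [NormedAddCommGroup W] [InnerProductSpace ℝ W] [FiniteDimensional ℝ W]
  {ι : Type*} [Fintype ι]

theorem LipschitzOnWith.contDiffOn_of_isometric [DecidableEq ι] (η : W [⋀^ι]→L[ℝ] ℝ)
    (b : Module.Basis ι ℝ V) {C : ℝ≥0} {Φ : V → W} {U : Set V} (hU : IsOpen U)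
    (hΦ : LipschitzOnWith C Φ U) {a G Q : ι → ι → V → ℝ}
    (has : ∀ i j, ContDiffOn ℝ ∞ (a i j) U) (hGs : ∀ i j, ContDiffOn ℝ ∞ (G i j) U)
    (hQs : ∀ i j, ContDiffOn ℝ ∞ (Q i j) U)
    (hell : ∀ x ∈ U, ∀ y : ι → ℝ, y ≠ 0 → 0 < ∑ i, ∑ j, a i j x * (y j * y i))
    (ha : ∀ᵐ x ∂μ, x ∈ U → ∀ i w,
      η (Function.update (fun j => fderiv ℝ Φ x (b j)) i w) =
        ∑ j, a i j x * ⟪fderiv ℝ Φ x (b j), w⟫)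
    (hG : ∀ᵐ x ∂μ, x ∈ U → ∀ i j, ⟪fderiv ℝ Φ x (b i), fderiv ℝ Φ x (b j)⟫ = G i j x)
    (hQ : ∀ᵐ x ∂μ, x ∈ U → ∀ z,
      z = ∑ j, ∑ l, (Q j l x * ⟪fderiv ℝ Φ x (b j), z⟫) • fderiv ℝ Φ x (b l)) :
    ContDiffOn ℝ ∞ Φ U := by
  obtain ⟨Ψ, hΨ, hΨΦ⟩ := hΦ.extend_finite_dimension
  have hfd : ∀ x ∈ U, fderiv ℝ Φ x = fderiv ℝ Ψ x := fun x hx =>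
    (hΨΦ.eventuallyEq_of_mem (hU.mem_nhds hx)).fderiv_eq
  suffices h : ∀ x ∈ U, ContDiffAt ℝ ∞ Ψ x from fun x hx =>
    ((h x hx).congr_of_eventuallyEq
      (hΨΦ.eventuallyEq_of_mem (hU.mem_nhds hx))).contDiffWithinAt
  intro x₀ hx₀
  obtain ⟨ε, hε, hεU⟩ := Metric.isOpen_iff.1 hU x₀ hx₀
  let ζ : ContDiffBump x₀ := ⟨ε / 3, ε / 2, by linarith, by linarith⟩
  have hζU : Metric.closedBall x₀ ζ.rOut ⊆ U :=
    (Metric.closedBall_subset_ball (show ε / 2 < ε by linarith)).trans hεU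
  have hζ1 : ∀ x ∈ Metric.ball x₀ (3 * (ε / 9)), ζ x = 1 ∧ x ∈ U := fun x hx =>
    ⟨ζ.one_of_mem_closedBall (Metric.ball_subset_closedBall
      (by rw [Metric.mem_ball] at hx ⊢; change _ < ε / 3; linarith)),
      hεU (Metric.ball_subset_ball (by linarith) hx)⟩
  have hζc : ∀ a : V → ℝ, HasCompactSupport fun x => ζ x * a x := fun a =>
    ζ.hasCompactSupport.mul_right
  obtain ⟨c, hc, hc'⟩ := exists_elliptic_const (isCompact_closedBall x₀ ζ.rOut)
    (fun i j => (has i j).continuousOn.mono hζU) (fun x hx => hell x (hζU hx))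
  refine LipschitzWith.contDiffAt_of_isometric μ η b hΨ (a := fun i j x => ζ x * a i j x)
    (G := fun i j x => ζ x * G i j x) (Q := fun i j x => ζ x * Q i j x) (r := ε / 9) (by positivity)
    hc (fun i j => ζ.contDiff_mul_of_contDiffOn hU hζU (has i j)) (fun _ _ => hζc _)
    (fun i j => ζ.contDiff_mul_of_contDiffOn hU hζU (hGs i j)) (fun _ _ => hζc _)
    (fun i j => ζ.contDiff_mul_of_contDiffOn hU hζU (hQs i j)) (fun _ _ => hζc _) ?_ ?_ ?_ ?_
  · intro x hx y
    simp only [(hζ1 x hx).1, one_mul]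
    refine hc' x ?_ y
    rw [Metric.mem_ball] at hx
    change dist x x₀ ≤ ε / 2
    linarith
  · filter_upwards [ha] with x h hx
    simpa only [(hζ1 x hx).1, one_mul, hfd x (hζ1 x hx).2] using h (hζ1 x hx).2
  · filter_upwards [hG] with x h hx
    simpa only [(hζ1 x hx).1, one_mul, hfd x (hζ1 x hx).2] using h (hζ1 x hx).2
  · filter_upwards [hQ] with x h hx
    simpa only [(hζ1 x hx).1, one_mul, hfd x (hζ1 x hx).2] using h (hζ1 x hx).2

end LocalRegularity

section MatrixFields

variable {V : Type*} [NormedAddCommGroup V] [NormedSpace ℝ V] {m : ℕ}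
  {U : Set V} {G : V → Matrix (Fin m) (Fin m) ℝ}

theorem contDiffOn_matrix_det {n : WithTop ℕ∞} (hG : ∀ i j, ContDiffOn ℝ n (fun x => G x i j) U) :
    ContDiffOn ℝ n (fun x => (G x).det) U := by
  simp only [Matrix.det_apply]
  exact ContDiffOn.sum fun σ _ => (contDiffOn_prod fun i _ => hG _ _).const_smul _

theorem contDiffOn_matrix_adjugate {n : WithTop ℕ∞}
    (hG : ∀ i j, ContDiffOn ℝ n (fun x => G x i j) U) (i j : Fin m) :
    ContDiffOn ℝ n (fun x => (G x).adjugate i j) U := by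
  simp only [Matrix.adjugate_apply]
  refine contDiffOn_matrix_det fun k l => ?_
  simp only [Matrix.updateRow_apply]
  split_ifs
  · exact contDiffOn_const
  · exact hG k l

theorem contDiffOn_matrix_inv {n : WithTop ℕ∞}
    (hG : ∀ i j, ContDiffOn ℝ n (fun x => G x i j) U) (hdet : ∀ x ∈ U, (G x).det ≠ 0)
    (i j : Fin m) : ContDiffOn ℝ n (fun x => (G x)⁻¹ i j) U := by
  simp only [Matrix.inv_def, Matrix.smul_apply, Ring.inverse_eq_inv', smul_eq_mul]
  exact ((contDiffOn_matrix_det hG).inv hdet).mul (contDiffOn_matrix_adjugate hG i j)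

end MatrixFields

/-- The determinant of a family of vectors of a Euclidean space, in the standard basis. -/
noncomputable def euclideanDet (m : ℕ) : EuclideanSpace ℝ (Fin m) [⋀^Fin m]→L[ℝ] ℝ :=
  { Matrix.detRowAlternating.compLinearMap
      (WithLp.linearEquiv 2 ℝ (Fin m → ℝ)).toLinearMap with
    cont := by
      change Continuous fun F : Fin m → EuclideanSpace ℝ (Fin m) =>
        (Matrix.of fun j i => F j i).det
      refine Continuous.matrix_det ?_
      refine continuous_matrix fun i j => ?_
      simp only [Matrix.of_apply]
      fun_prop }

theorem euclideanDet_apply {m : ℕ} (F : Fin m → EuclideanSpace ℝ (Fin m)) :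
    euclideanDet m F = (Matrix.of fun j i => F j i).det := rfl

section IsometricMatrix

variable {m : ℕ} {E G : Matrix (Fin m) (Fin m) ℝ}

theorem mul_inv_mul_transpose_eq_one (hG : Eᵀ * E = G) (hE : E.det ≠ 0) :
    E * G⁻¹ * Eᵀ = 1 := by
  have hu : IsUnit E.det := isUnit_iff_ne_zero.2 hE
  have hut : IsUnit Eᵀ.det := by rwa [Matrix.det_transpose]
  rw [← hG, Matrix.mul_inv_rev, ← Matrix.mul_assoc, Matrix.mul_nonsing_inv _ hu, one_mul,
    Matrix.nonsing_inv_mul _ hut]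

theorem adjugate_eq_of_transpose_mul_self (hG : Eᵀ * E = G) (hE : 0 < E.det) :
    E.adjugate = Real.sqrt G.det • (G⁻¹ * Eᵀ) := by
  have h1 : Real.sqrt G.det = E.det := by
    rw [← hG, Matrix.det_mul, Matrix.det_transpose, Real.sqrt_mul_self hE.le]
  calc E.adjugate = E.adjugate * (E * G⁻¹ * Eᵀ) := by
        rw [mul_inv_mul_transpose_eq_one hG hE.ne', mul_one]
    _ = (E.adjugate * E) * (G⁻¹ * Eᵀ) := by simp only [Matrix.mul_assoc]
    _ = _ := by rw [Matrix.adjugate_mul, h1, Matrix.smul_mul, one_mul]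

variable (F : Fin m → EuclideanSpace ℝ (Fin m))

theorem inner_eq_transpose_mulVec (w : EuclideanSpace ℝ (Fin m)) (j : Fin m) :
    ⟪F j, w⟫ = ((Matrix.of fun i j => F j i)ᵀ *ᵥ w.ofLp) j := by
  simp [PiLp.inner_apply, Matrix.mulVec, dotProduct, mul_comm]

theorem euclideanDet_update (hG : (Matrix.of fun i j => F j i)ᵀ * (Matrix.of fun i j => F j i) = G)
    (hE : 0 < (Matrix.of fun i j => F j i).det) (i : Fin m) (w : EuclideanSpace ℝ (Fin m)) :
    euclideanDet m (Function.update F i w) =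
      ∑ j, (Real.sqrt G.det * G⁻¹ i j) * ⟪F j, w⟫ := by
  have h1 : (Matrix.of fun j l => Function.update F i w j l) =
      (Matrix.of fun i j => F j i)ᵀ.updateRow i w.ofLp := by
    ext j l
    rcases eq_or_ne j i with rfl | h <;> simp [Matrix.updateRow_apply, *]
  rw [euclideanDet_apply, h1, ← Matrix.cramer_transpose_apply, Matrix.transpose_transpose,
    Matrix.cramer_eq_adjugate_mulVec, adjugate_eq_of_transpose_mul_self hG hE]
  simp only [inner_eq_transpose_mulVec]
  rw [Matrix.smul_mulVec, ← Matrix.mulVec_mulVec]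
  rw [Pi.smul_apply, Matrix.mulVec, dotProduct, Finset.smul_sum]
  exact Finset.sum_congr rfl fun j _ => by rw [smul_eq_mul, mul_assoc]

theorem eq_sum_inner_smul (hG : (Matrix.of fun i j => F j i)ᵀ * (Matrix.of fun i j => F j i) = G)
    (hE : 0 < (Matrix.of fun i j => F j i).det) (z : EuclideanSpace ℝ (Fin m)) :
    z = ∑ j, ∑ l, (G⁻¹ l j * ⟪F j, z⟫) • F l := by
  have h := congrArg (fun A => A *ᵥ z.ofLp) (mul_inv_mul_transpose_eq_one hG hE.ne')
  simp only [Matrix.one_mulVec, ← Matrix.mulVec_mulVec] at h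
  ext i
  rw [← congrFun h i, Finset.sum_comm]
  simp only [inner_eq_transpose_mulVec]
  simp only [Matrix.mulVec, dotProduct, WithLp.ofLp_sum, Finset.sum_apply, PiLp.smul_apply,
    smul_eq_mul, Matrix.of_apply, Finset.mul_sum, Matrix.transpose_apply, Finset.sum_mul]
  refine Finset.sum_congr rfl fun l _ => Finset.sum_congr rfl fun j _ =>
    Finset.sum_congr rfl fun k _ => by ring

end IsometricMatrix

/-- Orientation preserving Lipschitz isometries from a smooth Riemannian metric to Euclidean space
of the same dimension are smooth. -/
theorem LipschitzOnWith.contDiffOn_of_transpose_mul_self {m : ℕ} {U : Set (Fin m → ℝ)}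
    (hU : IsOpen U) {G : (Fin m → ℝ) → Matrix (Fin m) (Fin m) ℝ}
    (hG : ∀ i j, ContDiffOn ℝ ∞ (fun x => G x i j) U) (hGpd : ∀ x ∈ U, (G x).PosDef)
    {C : ℝ≥0} {Φ : (Fin m → ℝ) → EuclideanSpace ℝ (Fin m)} (hΦ : LipschitzOnWith C Φ U)
    (hae : ∀ᵐ x, x ∈ U →
      (Matrix.of fun i j => fderiv ℝ Φ x (Pi.single j 1) i)ᵀ *
        (Matrix.of fun i j => fderiv ℝ Φ x (Pi.single j 1) i) = G x ∧
      0 < (Matrix.of fun i j => fderiv ℝ Φ x (Pi.single j 1) i).det) :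
    ContDiffOn ℝ ∞ Φ U := by
  have hdet : ∀ x ∈ U, (G x).det ≠ 0 := fun x hx => (hGpd x hx).det_pos.ne'
  have hinv := contDiffOn_matrix_inv hG hdet
  refine LipschitzOnWith.contDiffOn_of_isometric volume (euclideanDet m) (Pi.basisFun ℝ (Fin m))
    hU hΦ (a := fun i j x => Real.sqrt (G x).det * (G x)⁻¹ i j) (G := fun i j x => G x i j)
    (Q := fun j l x => (G x)⁻¹ l j)
    (fun i j => ((contDiffOn_matrix_det hG).sqrt hdet).mul (hinv i j)) hG
    (fun j l => hinv l j) ?_ ?_ ?_ ?_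
  · intro x hx y hy
    have h := mul_pos (Real.sqrt_pos.2 (hGpd x hx).det_pos)
      ((hGpd x hx).inv.dotProduct_mulVec_pos hy)
    refine h.trans_eq ?_
    simp only [star_trivial, dotProduct, Matrix.mulVec, Finset.mul_sum]
    exact Finset.sum_congr rfl fun i _ => Finset.sum_congr rfl fun j _ => by ring
  · filter_upwards [hae] with x h hx i w
    simp only [Pi.basisFun_apply]
    exact euclideanDet_update _ (h hx).1 (h hx).2 i w
  · filter_upwards [hae] with x h hx i j
    simp only [Pi.basisFun_apply]
    rw [← (h hx).1, inner_eq_transpose_mulVec (fun i => fderiv ℝ Φ x (Pi.single i 1))]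
    simp [Matrix.mulVec, dotProduct, Matrix.mul_apply]
  · filter_upwards [hae] with x h hx z
    simp only [Pi.basisFun_apply]
    exact eq_sum_inner_smul _ (h hx).1 (h hx).2 z

section ColumnAlgebra

variable {d m : ℕ}

/-- The block diagonal matrix with blocks `H` and `1`. -/
def extendByOne (H : Matrix (Fin d) (Fin d) ℝ) : Matrix (Fin (d + 1)) (Fin (d + 1)) ℝ :=
  Matrix.of fun i j => Fin.lastCases (motive := fun _ => ℝ)
    (Fin.lastCases (motive := fun _ => ℝ) 1 (fun _ => 0) j)
    (fun i' => Fin.lastCases (motive := fun _ => ℝ) 0 (fun j' => H i' j') j) i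

variable (H : Matrix (Fin d) (Fin d) ℝ)

@[simp] theorem extendByOne_castSucc_castSucc (i j : Fin d) :
    extendByOne H i.castSucc j.castSucc = H i j := by simp [extendByOne]

@[simp] theorem extendByOne_castSucc_last (i : Fin d) :
    extendByOne H i.castSucc (Fin.last d) = 0 := by simp [extendByOne]

@[simp] theorem extendByOne_last_castSucc (j : Fin d) :
    extendByOne H (Fin.last d) j.castSucc = 0 := by simp [extendByOne]

@[simp] theorem extendByOne_last_last : extendByOne H (Fin.last d) (Fin.last d) = 1 := by
  simp [extendByOne]

theorem det_extendByOne : (extendByOne H).det = H.det := by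
  rw [Matrix.det_succ_row _ (Fin.last d), Fin.sum_univ_castSucc]
  simp only [extendByOne_last_castSucc, extendByOne_last_last, mul_zero, zero_mul,
    Finset.sum_const_zero, zero_add, Fin.val_last, mul_one, Fin.succAbove_last]
  rw [Even.neg_one_pow ⟨d, rfl⟩, one_mul]
  congr 1
  ext i j
  simp

theorem posDef_extendByOne {H : Matrix (Fin d) (Fin d) ℝ} (hH : H.PosDef) :
    (extendByOne H).PosDef := by
  refine Matrix.PosDef.of_dotProduct_mulVec_pos ?_ fun y hy => ?_
  · ext i j
    have := fun i j => hH.1.apply i j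
    simp only [star_trivial] at this
    refine Fin.lastCases ?_ (fun i => ?_) i <;> refine Fin.lastCases ?_ (fun j => ?_) j <;>
      simp [this]
  · have e : star y ⬝ᵥ (extendByOne H *ᵥ y) =
        star (fun i : Fin d => y i.castSucc) ⬝ᵥ (H *ᵥ fun i : Fin d => y i.castSucc) +
          y (Fin.last d) ^ 2 := by
      simp [dotProduct, Matrix.mulVec, Fin.sum_univ_castSucc, sq]
    rw [e]
    by_cases h0 : (fun i : Fin d => y i.castSucc) = 0
    · have hl : y (Fin.last d) ≠ 0 := fun hl => hy <| by
        ext i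
        exact Fin.lastCases hl (fun i => congrFun h0 i) i
      rw [h0]
      simp only [star_trivial, Matrix.mulVec_zero, dotProduct_zero, zero_add]
      positivity
    · exact add_pos_of_pos_of_nonneg (hH.dotProduct_mulVec_pos h0) (sq_nonneg _)

@[simp] theorem juxtCol_castSucc (F : Matrix (Fin m) (Fin d) ℝ) (w : Fin m → ℝ) (i : Fin m)
    (j : Fin d) : juxtCol F w i j.castSucc = F i j := by simp [juxtCol]

@[simp] theorem juxtCol_last (F : Matrix (Fin m) (Fin d) ℝ) (w : Fin m → ℝ) (i : Fin m) :
    juxtCol F w i (Fin.last d) = w i := by simp [juxtCol]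

theorem juxtCol_mul (F : Matrix (Fin m) (Fin d) ℝ) (w : Fin m → ℝ) :
    juxtCol (F * H) w = juxtCol F w * extendByOne H := by
  ext i j
  refine Fin.lastCases ?_ (fun j => ?_) j <;> simp [Matrix.mul_apply, Fin.sum_univ_castSucc]

theorem transpose_juxtCol_mul_juxtCol {F : Matrix (Fin m) (Fin d) ℝ} {w : Fin m → ℝ}
    (hFw : Fᵀ *ᵥ w = 0) (hw : vecNorm w = 1) :
    (juxtCol F w)ᵀ * juxtCol F w = extendByOne (Fᵀ * F) := by
  have h1 : ∑ i, w i * w i = 1 := by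
    rw [vecNorm, Real.sqrt_eq_one] at hw
    simpa [sq] using hw
  have h2 : ∀ j, ∑ i, F i j * w i = 0 := fun j => congrFun hFw j
  have h3 : ∀ j, ∑ i, w i * F i j = 0 := fun j => by simpa [mul_comm] using h2 j
  ext i j
  refine Fin.lastCases ?_ (fun i => ?_) i <;> refine Fin.lastCases ?_ (fun j => ?_) j <;>
    simp [Matrix.mul_apply, h1, h2, h3]

end ColumnAlgebra

theorem ae_comp_of_surjective {V W : Type*} [NormedAddCommGroup V] [NormedSpace ℝ V]
    [FiniteDimensional ℝ V] [MeasureSpace V] [BorelSpace V] [(volume : Measure V).IsAddHaarMeasure]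
    [NormedAddCommGroup W] [NormedSpace ℝ W] [FiniteDimensional ℝ W] [MeasureSpace W] [BorelSpace W]
    [(volume : Measure W).IsAddHaarMeasure] {L : V →L[ℝ] W} (hL : Function.Surjective L)
    {p : W → Prop} (hp : ∀ᵐ x, p x) : ∀ᵐ y, p (L y) := by
  have : Measure.QuasiMeasurePreserving L volume volume := by
    refine ⟨L.measurable, ?_⟩
    obtain ⟨c, -, hc⟩ := L.toLinearMap.exists_map_addHaar_eq_smul_addHaar volume volume hL
    rw [ContinuousLinearMap.coe_coe] at hc
    rw [hc]
    exact Measure.smul_absolutelyContinuous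
  exact this.ae hp

section NormalExtension

variable {d : ℕ}

/-- The projection forgetting the last coordinate. -/
noncomputable def initProj (d : ℕ) : (Fin (d + 1) → ℝ) →L[ℝ] (Fin d → ℝ) :=
  ContinuousLinearMap.pi fun i => ContinuousLinearMap.proj i.castSucc

@[simp] theorem initProj_apply (y : Fin (d + 1) → ℝ) (i : Fin d) :
    initProj d y i = y i.castSucc := rfl

@[simp] theorem initProj_snoc (x : Fin d → ℝ) (t : ℝ) :
    initProj d (Fin.snoc x t : Fin (d + 1) → ℝ) = x := by ext i; simp

theorem initProj_surjective : Function.Surjective (initProj d) := fun x => ⟨_, initProj_snoc x 0⟩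

theorem initProj_single_castSucc (j : Fin d) :
    initProj d (Pi.single j.castSucc 1) = Pi.single j 1 := by
  ext i
  simp [Pi.single_apply]

theorem initProj_single_last : initProj d (Pi.single (Fin.last d) 1) = 0 := by
  ext i
  simp

/-- The map `(x, t) ↦ f x + t v x`, with values in Euclidean space. -/
noncomputable def normalExtension (f v : (Fin d → ℝ) → Fin (d + 1) → ℝ) (y : Fin (d + 1) → ℝ) :
    EuclideanSpace ℝ (Fin (d + 1)) :=
  WithLp.toLp 2 (f (initProj d y) + y (Fin.last d) • v (initProj d y))

theorem jacobian_normalExtension {f v : (Fin d → ℝ) → Fin (d + 1) → ℝ} {y : Fin (d + 1) → ℝ}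
    (hf : DifferentiableAt ℝ f (initProj d y)) (hv : DifferentiableAt ℝ v (initProj d y)) :
    (Matrix.of fun i j => fderiv ℝ (normalExtension f v) y (Pi.single j 1) i) =
      juxtCol (jacOn univ f (initProj d y) + y (Fin.last d) • jacOn univ v (initProj d y))
        (v (initProj d y)) := by
  have h1 : HasFDerivAt (fun y => f (initProj d y)) _ y :=
    hf.hasFDerivAt.comp y (initProj d).hasFDerivAt
  have h2 : HasFDerivAt (fun y => v (initProj d y)) _ y :=
    hv.hasFDerivAt.comp y (initProj d).hasFDerivAt
  have h3 : HasFDerivAt (fun y : Fin (d + 1) → ℝ => y (Fin.last d)) _ y :=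
    (ContinuousLinearMap.proj (R := ℝ) (φ := fun _ : Fin (d + 1) => ℝ) (Fin.last d)).hasFDerivAt
  have h4 : HasFDerivAt (normalExtension f v) _ y :=
    ((EuclideanSpace.equiv (Fin (d + 1)) ℝ).symm.toContinuousLinearMap.hasFDerivAt).comp y
      (h1.add (h3.smul h2))
  ext i j
  rw [h4.fderiv]
  refine Fin.lastCases ?_ (fun j => ?_) j
  · simp [initProj_single_last]
  · simp [initProj_single_castSucc, jacOn]

theorem exists_lipschitzOnWith_normalExtension {f v : (Fin d → ℝ) → Fin (d + 1) → ℝ} {Lf Lv : ℝ≥0}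
    {s : Set (Fin d → ℝ)} (hf : LipschitzOnWith Lf f s) (hv : LipschitzOnWith Lv v s) {B : ℝ≥0}
    (hB : ∀ x ∈ s, ‖v x‖ ≤ B) : ∃ C, LipschitzOnWith C (normalExtension f v)
      {y | initProj d y ∈ s ∧ |y (Fin.last d)| ≤ 1} := by
  have hinit : ∀ y z, ‖initProj d y - initProj d z‖ ≤ ‖y - z‖ := fun y z => by
    refine (pi_norm_le_iff_of_nonneg (norm_nonneg _)).2 fun i => ?_
    exact norm_le_pi_norm (y - z) i.castSucc
  have h : LipschitzOnWith (Lf + (Lv + B))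
      (fun y => f (initProj d y) + y (Fin.last d) • v (initProj d y))
      {y | initProj d y ∈ s ∧ |y (Fin.last d)| ≤ 1} := by
    refine LipschitzOnWith.of_dist_le_mul fun y hy z hz => ?_
    have e : f (initProj d y) + y (Fin.last d) • v (initProj d y) -
        (f (initProj d z) + z (Fin.last d) • v (initProj d z)) =
        (f (initProj d y) - f (initProj d z)) +
          (y (Fin.last d) • (v (initProj d y) - v (initProj d z)) +
          (y (Fin.last d) - z (Fin.last d)) • v (initProj d z)) := by
      rw [smul_sub, sub_smul]; abel
    rw [dist_eq_norm, dist_eq_norm, e]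
    have hn := hinit y z
    have h1 : ‖f (initProj d y) - f (initProj d z)‖ ≤ Lf * ‖y - z‖ :=
      (hf.norm_sub_le hy.1 hz.1).trans (by gcongr)
    have h2 : ‖y (Fin.last d) • (v (initProj d y) - v (initProj d z))‖ ≤ Lv * ‖y - z‖ := by
      rw [norm_smul]
      refine (mul_le_of_le_one_left (norm_nonneg _) hy.2).trans ?_
      exact (hv.norm_sub_le hy.1 hz.1).trans (by gcongr)
    have h3 : ‖(y (Fin.last d) - z (Fin.last d)) • v (initProj d z)‖ ≤ B * ‖y - z‖ := by
      rw [norm_smul, mul_comm]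
      exact mul_le_mul (hB _ hz.1) (norm_le_pi_norm (y - z) (Fin.last d)) (norm_nonneg _) B.2
    refine (norm_add_le _ _).trans ?_
    have := _root_.norm_add_le (y (Fin.last d) • (v (initProj d y) - v (initProj d z)))
      ((y (Fin.last d) - z (Fin.last d)) • v (initProj d z))
    push_cast
    linarith
  have := (EuclideanSpace.equiv (Fin (d + 1)) ℝ).symm.toContinuousLinearMap.lipschitz.comp_lipschitzOnWith h
  exact ⟨_, this⟩

end NormalExtension

theorem jacOn_univ_eq {d m : ℕ} {Ω : Set (Fin d → ℝ)} (hΩ : IsOpen Ω)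
    (f : (Fin d → ℝ) → Fin m → ℝ) {x : Fin d → ℝ} (hx : x ∈ Ω) : jacOn univ f x = jacOn Ω f x := by
  simp only [jacOn, fderivWithin_univ, fderivWithin_of_isOpen hΩ hx]

/-- Regularity: a Lipschitz isometric immersion `f` of `(Ω, g)` into `ℝ^{d+1}`, with Lipschitz
positively oriented unit normal `v`, whose first fundamental form `g` and shape operator `S`
(defined via `dv = −df·S`) are smooth, is itself smooth (and so is its normal). -/
theorem regularity_of_lipschitz_isometric_immersion
    (d : ℕ) (hd : 1 ≤ d) (Ω : Set (Fin d → ℝ)) (hΩ : IsOpen Ω)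
    (g S : (Fin d → ℝ) → Matrix (Fin d) (Fin d) ℝ)
    (hg : ∀ i j, ContDiffOn ℝ (⊤ : ℕ∞) (fun x => g x i j) Ω)
    (hgpd : ∀ x ∈ Ω, (g x).PosDef)
    (hS : ∀ i j, ContDiffOn ℝ (⊤ : ℕ∞) (fun x => S x i j) Ω)
    (f v : (Fin d → ℝ) → Fin (d + 1) → ℝ) (Lf Lv : NNReal)
    (hf : LipschitzOnWith Lf f Ω) (hv : LipschitzOnWith Lv v Ω)
    (hae : ∀ᵐ x ∂(volume.restrict Ω),
      (jacOn Ω f x)ᵀ * jacOn Ω f x = g x ∧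
      (jacOn Ω f x)ᵀ *ᵥ v x = 0 ∧
      vecNorm (v x) = 1 ∧
      0 < (juxtCol (jacOn Ω f x) (v x)).det ∧
      jacOn Ω v x = -(jacOn Ω f x * S x)) :
    ContDiffOn ℝ (⊤ : ℕ∞) f Ω ∧ ContDiffOn ℝ (⊤ : ℕ∞) v Ω := by
  set Z : Set (Fin (d + 1) → ℝ) := initProj d ⁻¹' Ω with hZ
  have hZo : IsOpen Z := hΩ.preimage (initProj d).continuous
  have hpull : ∀ {a : (Fin d → ℝ) → ℝ}, ContDiffOn ℝ ∞ a Ω →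
      ContDiffOn ℝ ∞ (fun y => a (initProj d y)) Z := fun ha =>
    ha.comp (initProj d).contDiff.contDiffOn fun y hy => hy
  -- the factor by which the shape operator distorts the slice at height `t`
  set N : (Fin (d + 1) → ℝ) → Matrix (Fin d) (Fin d) ℝ :=
    fun y => 1 - y (Fin.last d) • S (initProj d y) with hN
  have hlast : ContDiff ℝ ∞ fun y : Fin (d + 1) → ℝ => y (Fin.last d) := contDiff_apply ℝ ℝ _
  have hNs : ∀ i j, ContDiffOn ℝ ∞ (fun y => N y i j) Z := fun i j => by
    simp only [hN, Matrix.sub_apply, Matrix.smul_apply, smul_eq_mul]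
    exact contDiffOn_const.sub (hlast.contDiffOn.mul (hpull (hS i j)))
  have hmain : ∀ x₀ ∈ Ω, ContDiffAt ℝ ∞ f x₀ ∧ ContDiffAt ℝ ∞ v x₀ := by
    intro x₀ hx₀
    set s : Set (Fin d → ℝ) := Ω ∩ Metric.ball x₀ 1 with hs
    have hso : IsOpen s := hΩ.inter Metric.isOpen_ball
    have hB : ∀ x ∈ s, ‖v x‖ ≤ (‖v x₀‖₊ + Lv : ℝ≥0) := by
      intro x hx
      have h1 := hv.norm_sub_le hx.1 hx₀
      have h2 : ‖x - x₀‖ ≤ 1 := by rw [← dist_eq_norm]; exact hx.2.le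
      have h3 := norm_le_norm_add_norm_sub' (v x) (v x₀)
      have h4 : (Lv : ℝ) * ‖x - x₀‖ ≤ Lv := mul_le_of_le_one_right Lv.2 h2
      push_cast
      linarith
    set U : Set (Fin (d + 1) → ℝ) :=
      {y | y ∈ Z ∧ N y ∈ {A | 0 < A.det}} ∩
        (initProj d ⁻¹' s ∩ {y | |y (Fin.last d)| < 1}) with hUdef
    have hUo : IsOpen U := by
      refine IsOpen.inter ?_ ((hso.preimage (initProj d).continuous).inter ?_)
      · exact ((contDiffOn_matrix_det hNs).continuousOn.isOpen_inter_preimage hZo isOpen_Ioi)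
      · exact isOpen_lt (by fun_prop) continuous_const
    have hUZ : U ⊆ Z := fun y hy => hy.1.1
    have hUN : ∀ y ∈ U, 0 < (N y).det := fun y hy => hy.1.2
    obtain ⟨C, hC⟩ := exists_lipschitzOnWith_normalExtension (hf.mono inter_subset_left)
      (hv.mono inter_subset_left) hB
    have hsmooth : ContDiffOn ℝ ∞ (normalExtension f v) U := by
      refine LipschitzOnWith.contDiffOn_of_transpose_mul_self hUo
        (G := fun y => extendByOne ((N y)ᵀ * g (initProj d y) * N y)) ?_ ?_
        (hC.mono fun y hy => ⟨hy.2.1, le_of_lt hy.2.2⟩) ?_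
      · intro i j
        refine Fin.lastCases ?_ (fun i => ?_) i <;> refine Fin.lastCases ?_ (fun j => ?_) j
        · simpa using contDiffOn_const
        · simpa using contDiffOn_const
        · simpa using contDiffOn_const
        · simp only [extendByOne_castSucc_castSucc, Matrix.mul_apply, Matrix.transpose_apply]
          exact ContDiffOn.sum fun k _ => (ContDiffOn.sum fun l _ =>
            ((hNs l i).mono hUZ).mul ((hpull (hg l k)).mono hUZ)).mul ((hNs k j).mono hUZ)
      · intro y hy
        refine posDef_extendByOne ?_
        have := (hgpd _ hy.1.1).conjTranspose_mul_mul_same (B := N y)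
          (Matrix.mulVec_injective_of_isUnit ((Matrix.isUnit_iff_isUnit_det _).2
            (isUnit_iff_ne_zero.2 (hUN y hy).ne')))
        rwa [Matrix.conjTranspose_eq_transpose_of_trivial] at this
      · filter_upwards [ae_comp_of_surjective initProj_surjective
            ((ae_restrict_iff' hΩ.measurableSet).1 hae),
          ae_comp_of_surjective initProj_surjective hf.ae_differentiableWithinAt_of_mem,
          ae_comp_of_surjective initProj_surjective hv.ae_differentiableWithinAt_of_mem]
          with y h hfy hvy hy
        have hx : initProj d y ∈ Ω := hy.1.1
        obtain ⟨h1, h2, h3, h4, h5⟩ := h hx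
        have hE : (Matrix.of fun i j =>
            fderiv ℝ (normalExtension f v) y (Pi.single j 1) i) =
            juxtCol (jacOn Ω f (initProj d y) * N y) (v (initProj d y)) := by
          rw [jacobian_normalExtension ((hfy hx).differentiableAt (hΩ.mem_nhds hx))
            ((hvy hx).differentiableAt (hΩ.mem_nhds hx)), jacOn_univ_eq hΩ f hx,
            jacOn_univ_eq hΩ v hx, h5]
          simp only [hN]
          rw [Matrix.mul_sub, Matrix.mul_one, Matrix.mul_smul, smul_neg, ← sub_eq_add_neg]
        rw [hE]
        constructor
        · rw [transpose_juxtCol_mul_juxtCol _ h3, Matrix.transpose_mul, ← h1]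
          · simp only [Matrix.mul_assoc]
          · rw [Matrix.transpose_mul, ← Matrix.mulVec_mulVec, h2, Matrix.mulVec_zero]
        · rw [juxtCol_mul, Matrix.det_mul, det_extendByOne]
          exact mul_pos h4 (hUN y hy)
    have hsnoc : ∀ t : ℝ, ContDiff ℝ ∞ fun x : Fin d → ℝ => (Fin.snoc x t : Fin (d + 1) → ℝ) := by
      intro t
      rw [contDiff_pi]
      refine Fin.lastCases ?_ fun i => ?_
      · simpa using contDiff_const
      · simpa using contDiff_apply ℝ ℝ i
    have hslice : ∀ t : ℝ, (Fin.snoc x₀ t : Fin (d + 1) → ℝ) ∈ U →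
        ContDiffAt ℝ ∞ (fun x => f x + t • v x) x₀ := by
      intro t ht
      have h1 := (hsmooth.contDiffAt (hUo.mem_nhds ht)).comp x₀ (hsnoc t).contDiffAt
      have h2 := (EuclideanSpace.equiv (Fin (d + 1)) ℝ).contDiff.contDiffAt.comp x₀ h1
      refine h2.congr_of_eventuallyEq (.of_forall fun x => ?_)
      simp only [Function.comp_apply, normalExtension, initProj_snoc, Fin.snoc_last]
      rfl
    have h0 : (Fin.snoc x₀ 0 : Fin (d + 1) → ℝ) ∈ U := by
      refine ⟨⟨by simpa [hZ] using hx₀, by simp [hN]⟩, ?_, by simp⟩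
      simpa [hs] using hx₀
    obtain ⟨t, htU, ht⟩ : ∃ t : ℝ, (Fin.snoc x₀ t : Fin (d + 1) → ℝ) ∈ U ∧ t ≠ 0 := by
      have hcont : Continuous fun t : ℝ => (Fin.snoc x₀ t : Fin (d + 1) → ℝ) := by
        refine continuous_pi ?_
        refine Fin.lastCases ?_ fun i => ?_
        · simpa using continuous_id'
        · simpa using continuous_const
      have h1 : ∀ᶠ t in 𝓝[≠] (0 : ℝ), (Fin.snoc x₀ t : Fin (d + 1) → ℝ) ∈ U :=
        (hcont.continuousAt.eventually (hUo.mem_nhds h0)).filter_mono nhdsWithin_le_nhds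
      exact (h1.and self_mem_nhdsWithin).exists
    have hf0 : ContDiffAt ℝ ∞ f x₀ := by simpa using hslice 0 h0
    refine ⟨hf0, ?_⟩
    refine (((hslice t htU).sub hf0).const_smul t⁻¹).congr_of_eventuallyEq (.of_forall fun x => ?_)
    simp [smul_smul, inv_mul_cancel₀ ht]
  exact ⟨fun x hx => (hmain x hx).1.contDiffWithinAt, fun x hx => (hmain x hx).2.contDiffWithinAt⟩
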